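/- arXiv:2604.22357 — 4 statements merged into one kernel-verified Lean document; each statement's English description precedes it below -/
import Mathlib

section
/- Every bipartite graph G=(V,E) with no trivial connected components (connected components with at most one edge) and vertex bipartition V = X ∪ Y admits a partial edge colouring with 3 colours satisfying every edge of G, such that every vertex v ∈ Y is incident with a uniquely coloured edge, and every vertex u ∈ X incident with at least one coloured edge is incident with a uniquely coloured edge. -/
/-!
Take a maximal disjoint family of sets of at least two vertices of `Y` with a common neighbour, send
each set of the family to such a neighbour, and send every other vertex of `Y` to a neighbour that
it shares with another vertex of `Y` (one exists unless the component is a star centred at it, which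
is done by giving two of its edges different colours). By maximality, a vertex `y` alone in its
fibre shares its image with some vertex of the family; making one such vertex a hub, attached to the
images of all the `y` that selected it, partitions `Y` among subdivided stars. In each of them a
vertex `x ∈ X` has an edge of colour `0` and an edge of nonzero colour which are both unique at `x`,
while no vertex of `Y` sees both `0` and another colour. So one of the two edges at `x` satisfies
any given edge `xy`. If `x` is not in any of these stars, then no edge at `x` is coloured and the
uniquely coloured edge at `y` satisfies `xy`.
-/

open SimpleGraph

/-- The closed neighbourhood of an edge `e`: all edges of `G` sharing a vertex with `e`. -/
def ECN {V : Type*} (G : SimpleGraph V) (e : Sym2 V) : Set (Sym2 V) :=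
  {f | f ∈ G.edgeSet ∧ ∃ w, w ∈ f ∧ w ∈ e}

/-- The open neighbourhood of an edge `e`. -/
def EON {V : Type*} (G : SimpleGraph V) (e : Sym2 V) : Set (Sym2 V) :=
  ECN G e \ {e}

/-- `c` is a closed conflict-free edge colouring of `G` with `k` colours. -/
def ClosedCF {V : Type*} (G : SimpleGraph V) (c : Sym2 V → ℕ) (k : ℕ) : Prop :=
  (∀ e ∈ G.edgeSet, c e < k) ∧
  ∀ e ∈ G.edgeSet, ∃ α, ∃! f, f ∈ ECN G e ∧ c f = α

/-- `c` is an open conflict-free edge colouring of `G` with `k` colours. -/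
def OpenCF {V : Type*} (G : SimpleGraph V) (c : Sym2 V → ℕ) (k : ℕ) : Prop :=
  (∀ e ∈ G.edgeSet, c e < k) ∧
  ∀ e ∈ G.edgeSet, (EON G e).Nonempty → ∃ α, ∃! f, f ∈ EON G e ∧ c f = α

/-- `c` is a conflict-free edge colouring of `G` with `k` colours:
every non-isolated edge `e` has an edge `e'` in its open neighbourhood whose
colour appears on no other edge of the closed neighbourhood of `e`. -/
def ConflictFree {V : Type*} (G : SimpleGraph V) (c : Sym2 V → ℕ) (k : ℕ) : Prop :=
  (∀ e ∈ G.edgeSet, c e < k) ∧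
  ∀ e ∈ G.edgeSet, (EON G e).Nonempty →
    ∃ e' ∈ EON G e, ∀ f ∈ ECN G e, c f = c e' → f = e'

/-- A partial edge colouring of `G` with `k` colours. -/
def PartialColouring {V : Type*} (G : SimpleGraph V) (c : Sym2 V → Option ℕ) (k : ℕ) : Prop :=
  ∀ e α, c e = some α → e ∈ G.edgeSet ∧ α < k

/-- An edge `e` is satisfied by the partial colouring `c`. -/
def SatisfiedP {V : Type*} (G : SimpleGraph V) (c : Sym2 V → Option ℕ) (e : Sym2 V) : Prop :=
  ∃ e' ∈ EON G e, ∃ α, c e' = some α ∧ ∀ f ∈ ECN G e, c f = some α → f = e'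

/-- Vertex `v` is incident with a uniquely coloured edge under partial colouring `c`. -/
def UniqueAt {V : Type*} (G : SimpleGraph V) (c : Sym2 V → Option ℕ) (v : V) : Prop :=
  ∃ e ∈ G.incidenceSet v, ∃ α, c e = some α ∧
    ∀ f ∈ G.incidenceSet v, c f = some α → f = e

/-- `G` is `k`-degenerate: there is a vertex ordering in which every vertex
has at most `k` earlier neighbours. -/
def IsDegenerate {V : Type*} (G : SimpleGraph V) (k : ℕ) : Prop :=
  ∃ f : V ↪ ℕ, ∀ v, {u ∈ G.neighborSet v | f u < f v}.ncard ≤ k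

/-- The open conflict-free chromatic index. -/
noncomputable def ocfIndex {V : Type*} (G : SimpleGraph V) : ℕ :=
  sInf {k | ∃ c, OpenCF G c k}

/-- The closed conflict-free chromatic index. -/
noncomputable def ccfIndex {V : Type*} (G : SimpleGraph V) : ℕ :=
  sInf {k | ∃ c, ClosedCF G c k}

/-- The conflict-free chromatic index. -/
noncomputable def cfIndex {V : Type*} (G : SimpleGraph V) : ℕ :=
  sInf {k | ∃ c, ConflictFree G c k}

section SpiderCover

variable {V : Type*} {G : SimpleGraph V} {Y : Set V} {stem : V → V} {y : V}

theorem exists_maximal_pairwiseDisjoint {ι : Type*} (T : Set (Set ι))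
    (hT : ∀ s ∈ T, s.Nonempty) :
    ∃ P ⊆ T, P.PairwiseDisjoint id ∧ ∀ s ∈ T, ∃ p ∈ P, (s ∩ p).Nonempty := by
  obtain ⟨P, hP⟩ := zorn_subset {P | P ⊆ T ∧ P.PairwiseDisjoint id} fun C hC hchain ↦
    ⟨⋃₀ C, ⟨Set.sUnion_subset fun P hP ↦ (hC hP).1,
      (Set.pairwiseDisjoint_sUnion hchain.directedOn).2 fun P hP ↦ (hC hP).2⟩,
      fun P hP ↦ Set.subset_sUnion_of_mem hP⟩
  refine ⟨P, hP.prop.1, hP.prop.2, fun s hs ↦ ?_⟩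
  by_contra! hdisj
  have hsP : s ∈ P := by
    refine hP.mem_of_prop_insert ⟨Set.insert_subset hs hP.prop.1, hP.prop.2.insert ?_⟩
    exact fun p hp _ ↦ Set.disjoint_iff_inter_eq_empty.2 (hdisj p hp)
  exact (hT s hs).ne_empty (by simpa using hdisj s hsP)

/-- `y` is alone in its fibre under `f`, viewed as a function on `Y`. -/
def IsSolitary (Y : Set V) (f : V → V) (y : V) : Prop :=
  ∀ y' ∈ Y, f y' = f y → y' = y

theorem exists_neighbour_choice
    (hY : ∀ y ∈ Y, ∃ x, G.Adj x y ∧ ∃ y' ∈ Y, y' ≠ y ∧ G.Adj x y') :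
    ∃ f : V → V, (∀ y ∈ Y, G.Adj (f y) y) ∧
      ∀ y ∈ Y, IsSolitary Y f y → ∃ y' ∈ Y, G.Adj (f y) y' ∧ ¬ IsSolitary Y f y' := by
  obtain ⟨P, hPT, hdisj, hmax⟩ := exists_maximal_pairwiseDisjoint
    {p : Set V | p ⊆ Y ∧ p.Nontrivial ∧ ∃ x, ∀ y ∈ p, G.Adj x y} fun p hp ↦ hp.2.1.nonempty
  choose centre hcentre using fun p : P ↦ (hPT p.2).2.2
  have hchoice : ∀ y ∈ Y, ∃ x, G.Adj x y ∧ (∃ y' ∈ Y, y' ≠ y ∧ G.Adj x y') ∧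
      ∀ p : P, y ∈ p.1 → x = centre p := by
    intro y hy
    by_cases hcov : ∃ p : P, y ∈ p.1
    · obtain ⟨p, hyp⟩ := hcov
      obtain ⟨y', hy'p, hne⟩ := (hPT p.2).2.1.exists_ne y
      refine ⟨centre p, hcentre p y hyp,
        ⟨y', (hPT p.2).1 hy'p, hne, hcentre p y' hy'p⟩, fun q hyq ↦ ?_⟩
      rw [Subtype.ext (hdisj.elim_set p.2 q.2 y hyp hyq)]
    · obtain ⟨x, hx, hx'⟩ := hY y hy
      exact ⟨x, hx, hx', fun p hyp ↦ (hcov ⟨p, hyp⟩).elim⟩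
  choose! f hadj hother hcov using hchoice
  have not_solitary : ∀ p ∈ P, ∀ y ∈ p, ¬ IsSolitary Y f y := by
    intro p hp y hyp hsol
    obtain ⟨y', hy'p, hne⟩ := (hPT hp).2.1.exists_ne y
    have hpY := (hPT hp).1
    refine hne (hsol y' (hpY hy'p) ?_)
    rw [hcov y' (hpY hy'p) ⟨p, hp⟩ hy'p, hcov y (hpY hyp) ⟨p, hp⟩ hyp]
  refine ⟨f, hadj, fun y hy hsol ↦ ?_⟩
  obtain ⟨y', hy', hne, hadj'⟩ := hother y hy
  obtain ⟨p, hp, w, hw, hwp⟩ := hmax {y, y'}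
    ⟨Set.pair_subset hy hy', Set.nontrivial_pair hne.symm, f y, by simp [hadj y hy, hadj']⟩
  obtain rfl | rfl := hw
  · exact (not_solitary p hp w hwp hsol).elim
  · exact ⟨w, hy', hadj', not_solitary p hp w hwp⟩

/-- A partition of `Y` among subdivided stars of `G`. Each `y ∈ Y` is attached to `stem y`, and
each stem `x ∈ stem '' Y` is joined to two distinct vertices of `Y`: its private `leaf x`, and
`hub x`, which several stems may share. All other vertices of `Y` hang off a stem to which the hub
of that stem is itself attached. The values of `leaf` and `hub` away from the stems are junk. -/
structure IsSpiderCover (G : SimpleGraph V) (Y : Set V) (stem leaf hub : V → V) : Prop where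
  adj_stem : ∀ y ∈ Y, G.Adj (stem y) y
  leaf_mem : ∀ x ∈ stem '' Y, leaf x ∈ Y
  stem_leaf : ∀ x ∈ stem '' Y, stem (leaf x) = x
  hub_mem : ∀ x ∈ stem '' Y, hub x ∈ Y
  adj_hub : ∀ x ∈ stem '' Y, G.Adj x (hub x)
  leaf_ne_hub : ∀ x ∈ stem '' Y, ∀ x' ∈ stem '' Y, leaf x ≠ hub x'
  hub_stem_hub : ∀ x ∈ stem '' Y, hub (stem (hub x)) = hub x
  eq_leaf_or_eq_hub_or : ∀ y ∈ Y,
    y = leaf (stem y) ∨ y = hub (stem y) ∨ stem (hub (stem y)) = stem y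

/-- `a` and `b` can serve as leaf and hub of the stem `x`, where `D` is the set of those vertices of
`Y` that may be hubs of several stems. -/
structure IsLeg (G : SimpleGraph V) (Y D : Set V) (stem : V → V) (x a b : V) : Prop where
  leaf_mem : a ∈ Y
  leaf_notMem : a ∉ D
  stem_leaf : stem a = x
  hub_mem : b ∈ Y
  adj_hub : G.Adj x b
  leaf_ne_hub : a ≠ b
  stem_hub : b ∉ D → stem b = x
  eq_hub : ∀ d ∈ D, stem d = x → d = b
  eq_leaf : b ∈ D → ∀ y ∈ Y, y ∉ D → stem y = x → y = a

theorem exists_isSpiderCover_of_isLeg {D : Set V} (hadj : ∀ y ∈ Y, G.Adj (stem y) y)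
    (hleg : ∀ x ∈ stem '' Y, ∃ a b, IsLeg G Y D stem x a b) :
    ∃ leaf hub, IsSpiderCover G Y stem leaf hub := by
  choose! leaf hub hleg using hleg
  refine ⟨leaf, hub, hadj, fun x hx ↦ (hleg x hx).leaf_mem, fun x hx ↦ (hleg x hx).stem_leaf,
    fun x hx ↦ (hleg x hx).hub_mem, fun x hx ↦ (hleg x hx).adj_hub, ?_, ?_, ?_⟩
  · intro x hx x' hx' heq
    have hhub : stem (hub x') = x' := (hleg x' hx').stem_hub (heq ▸ (hleg x hx).leaf_notMem)
    obtain rfl : x = x' := by rw [← (hleg x hx).stem_leaf, heq, hhub]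
    exact (hleg x hx).leaf_ne_hub heq
  · intro x hx
    by_cases hD : hub x ∈ D
    · exact ((hleg _ ⟨hub x, (hleg x hx).hub_mem, rfl⟩).eq_hub _ hD rfl).symm
    · rw [(hleg x hx).stem_hub hD]
  · intro y hy
    have hy' := hleg _ (Set.mem_image_of_mem stem hy)
    by_cases hyD : y ∈ D
    · exact .inr (.inl (hy'.eq_hub y hyD rfl))
    by_cases hD : hub (stem y) ∈ D
    · exact .inl (hy'.eq_leaf hD y hy hyD rfl)
    · exact .inr (.inr (hy'.stem_hub hD))

theorem isLeg_of_isSolitary {D : Set V} {f : V → V} {d : V} (hstem : ∀ y ∉ D, stem y = f y)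
    (hD : ∀ d' ∈ D, stem d' = f y → d' = d) (hy : y ∈ Y) (hyD : y ∉ D) (hsol : IsSolitary Y f y)
    (hd : d ∈ Y) (hdD : d ∈ D) (hadj : G.Adj (f y) d) : IsLeg G Y D stem (f y) y d where
  leaf_mem := hy
  leaf_notMem := hyD
  stem_leaf := hstem y hyD
  hub_mem := hd
  adj_hub := hadj
  leaf_ne_hub h := hyD (h ▸ hdD)
  stem_hub h := (h hdD).elim
  eq_hub := hD
  eq_leaf _ y' hy' hy'D hst := hsol y' hy' ((hstem y' hy'D).symm.trans hst)

theorem exists_isLeg_of_not_isSolitary {D : Set V} {f : V → V} (hfY : ∀ y ∈ Y, G.Adj (f y) y)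
    (hstem : ∀ y ∉ D, stem y = f y) (hD : ∀ d ∈ D, stem d ≠ f y) (hy : y ∈ Y) (hyD : y ∉ D)
    (hsol : ¬ IsSolitary Y f y) : ∃ b, IsLeg G Y D stem (f y) y b := by
  have hD' : ∀ b, ∀ d ∈ D, stem d = f y → d = b := fun b d hd hdy ↦ (hD d hd hdy).elim
  by_cases hout : ∃ b ∈ Y, b ∉ D ∧ b ≠ y ∧ f b = f y
  · obtain ⟨b, hb, hbD, hne, hf⟩ := hout
    exact ⟨b, hy, hyD, hstem y hyD, hb, hf ▸ hfY b hb, hne.symm,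
      fun _ ↦ (hstem b hbD).trans hf, hD' b, fun h ↦ (hbD h).elim⟩
  · have hout : ∀ b ∈ Y, b ∉ D → f b = f y → b = y := fun b hb hbD hf ↦
      by_contra fun hne ↦ hout ⟨b, hb, hbD, hne, hf⟩
    obtain ⟨b, hb, hf, hne⟩ : ∃ b ∈ Y, f b = f y ∧ b ≠ y := by simpa [IsSolitary] using hsol
    exact ⟨b, hy, hyD, hstem y hyD, hb, hf ▸ hfY b hb, hne.symm,
      fun hbD ↦ (hne (hout b hb hbD hf)).elim, hD' b,
      fun _ y' hy' hy'D hst ↦ hout y' hy' hy'D ((hstem y' hy'D).symm.trans hst)⟩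

theorem exists_isSpiderCover
    (hY : ∀ y ∈ Y, ∃ x, G.Adj x y ∧ ∃ y' ∈ Y, y' ≠ y ∧ G.Adj x y') :
    ∃ stem leaf hub, IsSpiderCover G Y stem leaf hub := by
  classical
  obtain ⟨f, hfY, hsol⟩ := exists_neighbour_choice hY
  choose! g hgY hadjg hgsol using hsol
  let D := g '' {y ∈ Y | IsSolitary Y f y}
  have notMem_of_solitary : ∀ y, IsSolitary Y f y → y ∉ D := by
    rintro _ hy ⟨u, ⟨hu, husol⟩, rfl⟩
    exact hgsol u hu husol hy
  choose! u hu hgu using fun d (hd : d ∈ D) ↦ hd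
  let stem y := if y ∈ D then f (u y) else f y
  have stem_of_mem : ∀ y ∈ D, stem y = f (u y) := fun y hy ↦ if_pos hy
  have stem_of_notMem : ∀ y ∉ D, stem y = f y := fun y hy ↦ if_neg hy
  have hadj : ∀ y ∈ Y, G.Adj (stem y) y := by
    intro y hy
    by_cases hyD : y ∈ D
    · simpa only [stem_of_mem y hyD, hgu y hyD] using hadjg _ (hu y hyD).1 (hu y hyD).2
    · simpa only [stem_of_notMem y hyD] using hfY y hy
  have hstem : ∀ x ∈ stem '' Y, ∃ y ∈ Y, y ∉ D ∧ f y = x := by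
    rintro _ ⟨y, hy, rfl⟩
    by_cases hyD : y ∈ D
    · exact ⟨u y, (hu y hyD).1, notMem_of_solitary _ (hu y hyD).2, (stem_of_mem y hyD).symm⟩
    · exact ⟨y, hy, hyD, (stem_of_notMem y hyD).symm⟩
  refine ⟨stem, exists_isSpiderCover_of_isLeg (D := D) hadj fun x hx ↦ ?_⟩
  obtain ⟨y, hy, hyD, rfl⟩ := hstem x hx
  have eq_of_stem_eq : ∀ d ∈ D, stem d = f y → y = u d := fun d hd hdy ↦
    (hu d hd).2 y hy (hdy.symm.trans (stem_of_mem d hd))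
  by_cases hysol : IsSolitary Y f y
  · have hgD : g y ∈ D := ⟨y, ⟨hy, hysol⟩, rfl⟩
    exact ⟨y, g y, isLeg_of_isSolitary stem_of_notMem
      (fun d hd hdy ↦ by rw [eq_of_stem_eq d hd hdy, hgu d hd]) hy hyD hysol (hgY y hy hysol) hgD
      (hadjg y hy hysol)⟩
  · exact ⟨y, exists_isLeg_of_not_isSolitary hfY stem_of_notMem
      (fun d hd hdy ↦ hysol (eq_of_stem_eq d hd hdy ▸ (hu d hd).2)) hy hyD hysol⟩

end SpiderCover

section Colouring

variable {V : Type*} {G : SimpleGraph V} {X Y : Set V} {c : Sym2 V → Option ℕ}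
  {stem leaf hub : V → V} {u v w w₁ w₂ x y z : V} {α β : ℕ}

/-- The edge `vw` has colour `α`, and no other edge at `v` does. -/
def IsUniqueColourAt (G : SimpleGraph V) (c : Sym2 V → Option ℕ) (v w : V) (α : ℕ) : Prop :=
  G.Adj v w ∧ ∀ u, G.Adj v u → (c s(v, u) = some α ↔ u = w)

/-- No edge at `v` has colour `α`. -/
def Misses (G : SimpleGraph V) (c : Sym2 V → Option ℕ) (v : V) (α : ℕ) : Prop :=
  ∀ u, G.Adj v u → c s(v, u) ≠ some α

/-- `y` has a uniquely coloured edge, every edge at `y` is satisfied, and every neighbour of `y`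
has a uniquely coloured edge if its edge to `y` is coloured. A colouring that is good at every
vertex of `Y` is a colouring as sought. -/
def IsGoodAt (G : SimpleGraph V) (c : Sym2 V → Option ℕ) (y : V) : Prop :=
  UniqueAt G c y ∧ ∀ x, G.Adj x y →
    SatisfiedP G c s(x, y) ∧ ((c s(x, y)).isSome → UniqueAt G c x)

theorem IsUniqueColourAt.uniqueAt (h : IsUniqueColourAt G c v w α) : UniqueAt G c v := by
  refine ⟨s(v, w), ⟨h.1, by simp⟩, α, (h.2 w h.1).2 rfl, ?_⟩
  rintro f ⟨hf, u, rfl⟩ hcol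
  rw [(h.2 u hf).1 hcol]

theorem IsUniqueColourAt.satisfiedP (h : IsUniqueColourAt G c v w α) (hvu : G.Adj v u)
    (hu : Misses G c u α) : SatisfiedP G c s(v, u) := by
  have hvw : c s(v, w) = some α := (h.2 w h.1).2 rfl
  refine ⟨s(v, w), ⟨⟨h.1, v, by simp, by simp⟩, fun heq ↦ ?_⟩, α, hvw, ?_⟩
  · rw [Set.mem_singleton_iff.1 heq, Sym2.eq_swap] at hvw
    exact hu v hvu.symm hvw
  · rintro f ⟨hf, p, ⟨q, rfl⟩, hp⟩ hcol
    obtain rfl | rfl := Sym2.mem_iff.1 hp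
    · rw [(h.2 q hf).1 hcol]
    · exact (hu q hf hcol).elim

theorem satisfiedP_of_two_unique (h₁ : IsUniqueColourAt G c v w₁ α)
    (h₂ : IsUniqueColourAt G c v w₂ β) (hvu : G.Adj v u)
    (hu : Misses G c u α ∨ Misses G c u β) : SatisfiedP G c s(v, u) :=
  hu.elim (h₁.satisfiedP hvu) (h₂.satisfiedP hvu)

theorem isGoodAt_of_pendant (hα : IsUniqueColourAt G c z w₁ α)
    (hβ : IsUniqueColourAt G c z w₂ β) (hαβ : α ≠ β)
    (hz : ∀ x, G.Adj x z → ∀ y, G.Adj x y → y = z) : IsGoodAt G c z := by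
  refine ⟨hα.uniqueAt, fun x hxz ↦ ⟨?_, fun hsome ↦ ?_⟩⟩
  · rw [Sym2.eq_swap]
    refine satisfiedP_of_two_unique hα hβ hxz.symm ?_
    by_cases hx : c s(x, z) = some α
    · right
      intro y hxy
      rw [hz x hxz y hxy, hx]
      simpa using hαβ
    · left
      intro y hxy
      rwa [hz x hxz y hxy]
  · obtain ⟨γ, hγ⟩ := Option.isSome_iff_exists.1 hsome
    have hunique : IsUniqueColourAt G c x z γ :=
      ⟨hxz, fun y hxy ↦ by simp [hz x hxz y hxy, hγ]⟩
    exact hunique.uniqueAt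

open Classical in
/-- The colour of the edge between `x` and `y ∈ Y` in the colouring of a spider cover. The edges to
the leaves get colour `0`. At each hub the edge to its own stem gets colour `1` and all others
colour `2`. The remaining vertices of `Y` get their only coloured edge in colour `2`. -/
noncomputable def spiderColour (Y : Set V) (stem leaf hub : V → V) (x y : V) : Option ℕ :=
  if x ∈ stem '' Y then
    if y = leaf x then some 0
    else if y = hub x then if stem y = x then some 1 else some 2
    else if stem y = x then some 2 else none
  else none

theorem spiderColour_of_notMem (hx : x ∉ stem '' Y) : spiderColour Y stem leaf hub x y = none :=
  if_neg hx

theorem spiderColour_lt_three (h : spiderColour Y stem leaf hub x y = some α) : α < 3 := by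
  unfold spiderColour at h
  grind

theorem spiderColour_eq_zero_iff (hx : x ∈ stem '' Y) :
    spiderColour Y stem leaf hub x y = some 0 ↔ y = leaf x := by
  unfold spiderColour
  grind

namespace IsSpiderCover

theorem exists_spiderColour_eq_iff_eq_hub (h : IsSpiderCover G Y stem leaf hub)
    (hx : x ∈ stem '' Y) :
    ∃ β ≠ 0, ∀ y ∈ Y, spiderColour Y stem leaf hub x y = some β ↔ y = hub x := by
  have hne := h.leaf_ne_hub x hx x hx
  have hor := h.eq_leaf_or_eq_hub_or
  unfold spiderColour
  by_cases hown : stem (hub x) = x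
  · exact ⟨1, by simp, by grind⟩
  · exact ⟨2, by simp, by grind⟩

theorem exists_spiderColour_eq_iff_eq_stem (h : IsSpiderCover G Y stem leaf hub) (hy : y ∈ Y) :
    ∃ α, ∀ x, spiderColour Y stem leaf hub x y = some α ↔ x = stem y := by
  have hmem : stem y ∈ stem '' Y := Set.mem_image_of_mem stem hy
  have hleaf := h.stem_leaf
  have hhub := h.hub_stem_hub
  unfold spiderColour
  by_cases hyl : y = leaf (stem y)
  · exact ⟨0, by grind⟩
  by_cases hyh : y = hub (stem y)
  · exact ⟨1, by grind⟩
  · exact ⟨2, by grind⟩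

theorem spiderColour_eq_zero_of_eq_zero (h : IsSpiderCover G Y stem leaf hub) {x' : V}
    (hzero : spiderColour Y stem leaf hub x y = some 0)
    (hα : spiderColour Y stem leaf hub x' y = some α) : α = 0 := by
  have hleaf := h.stem_leaf
  have hne := h.leaf_ne_hub
  unfold spiderColour at hzero hα
  grind

theorem isGoodAt (h : IsSpiderCover G Y stem leaf hub)
    (hY : ∀ x, ∀ y ∈ Y, G.Adj x y → ∀ y', G.Adj x y' → y' ∈ Y)
    (hc : ∀ x, ∀ y ∈ Y, G.Adj x y → c s(x, y) = spiderColour Y stem leaf hub x y) (hy : y ∈ Y) :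
    IsGoodAt G c y := by
  have hcy : ∀ x, G.Adj y x → c s(y, x) = spiderColour Y stem leaf hub x y := fun x hyx ↦ by
    rw [Sym2.eq_swap, hc x y hy hyx.symm]
  obtain ⟨α, hα⟩ := h.exists_spiderColour_eq_iff_eq_stem hy
  have hunique : IsUniqueColourAt G c y (stem y) α :=
    ⟨(h.adj_stem y hy).symm, fun x hyx ↦ by rw [hcy x hyx, hα]⟩
  refine ⟨hunique.uniqueAt, fun x hxy ↦ ?_⟩
  have hcx : ∀ y', G.Adj x y' → y' ∈ Y ∧ c s(x, y') = spiderColour Y stem leaf hub x y' :=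
    fun y' hxy' ↦ ⟨hY x y hy hxy y' hxy', hc x y' (hY x y hy hxy y' hxy') hxy'⟩
  by_cases hx : x ∈ stem '' Y
  · have hzero : IsUniqueColourAt G c x (leaf x) 0 := by
      have hadj := h.adj_stem (leaf x) (h.leaf_mem x hx)
      rw [h.stem_leaf x hx] at hadj
      exact ⟨hadj, fun y' hxy' ↦ by rw [(hcx y' hxy').2, spiderColour_eq_zero_iff hx]⟩
    obtain ⟨β, hβ0, hβ⟩ := h.exists_spiderColour_eq_iff_eq_hub hx
    have hbeta : IsUniqueColourAt G c x (hub x) β :=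
      ⟨h.adj_hub x hx, fun y' hxy' ↦ by rw [(hcx y' hxy').2, hβ y' (hcx y' hxy').1]⟩
    have hmiss : Misses G c y 0 ∨ Misses G c y β := by
      refine or_iff_not_imp_left.2 fun hsees x' hyx' hx' ↦ hβ0 ?_
      obtain ⟨x₀, hyx₀, hx₀⟩ : ∃ x₀, G.Adj y x₀ ∧ c s(y, x₀) = some 0 := by
        simpa [Misses] using hsees
      rw [hcy _ hyx₀] at hx₀
      rw [hcy _ hyx'] at hx'
      exact h.spiderColour_eq_zero_of_eq_zero hx₀ hx'
    exact ⟨satisfiedP_of_two_unique hzero hbeta hxy hmiss, fun _ ↦ hzero.uniqueAt⟩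
  · have hnone : ∀ y', G.Adj x y' → c s(x, y') = none := fun y' hxy' ↦ by
      rw [(hcx y' hxy').2, spiderColour_of_notMem hx]
    refine ⟨?_, fun hsome ↦ by simp [hnone y hxy] at hsome⟩
    rw [Sym2.eq_swap]
    exact hunique.satisfiedP hxy.symm fun y' hxy' ↦ by simp [hnone y' hxy']

end IsSpiderCover

/-- The vertices of `Y` that are the centre of a star forming a connected component of `G`. -/
def starCentres (G : SimpleGraph V) (Y : Set V) : Set V :=
  {z ∈ Y | ∀ x, G.Adj x z → ∀ y, G.Adj x y → y = z}

theorem exists_adj_ne_of_nonempty_EON (h : (EON G s(x, z)).Nonempty)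
    (hx : ∀ y, G.Adj x y → y = z) : ∃ x', x' ≠ x ∧ G.Adj x' z := by
  obtain ⟨_, ⟨hf, p, ⟨q, rfl⟩, hp⟩, hne⟩ := h
  obtain rfl | rfl := Sym2.mem_iff.1 hp
  · exact (hne (by rw [hx q hf]; rfl)).elim
  · exact ⟨q, fun h ↦ hne (by rw [h]; exact Sym2.eq_swap), hf.symm⟩

theorem exists_sym2_eq_of_isBipartiteWith {γ : Type*} (hG : G.IsBipartiteWith X Y)
    (col : V → V → Option γ) :
    ∃ c : Sym2 V → Option γ, (∀ e ∉ G.edgeSet, c e = none) ∧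
      ∀ x, ∀ y ∈ Y, G.Adj x y → c s(x, y) = col x y := by
  classical
  have hdisj : ∀ u v, G.Adj u v → u ∈ Y → v ∉ Y := fun u v huv hu hv ↦
    hG.disjoint.notMem_of_mem_left (hG.symm.mem_of_mem_adj hu huv) hv
  have hmem : ∀ u v, G.Adj u v → u ∉ Y → v ∈ Y := fun u v huv hu ↦
    (hG.mem_of_adj huv).elim And.right fun h ↦ (hu h.1).elim
  refine ⟨Sym2.lift ⟨fun u v ↦
    if G.Adj u v then if v ∈ Y then col u v else col v u else none, fun u v ↦ ?_⟩, ?_, ?_⟩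
  · grind [G.adj_comm u v]
  · rintro ⟨u, v⟩ huv
    exact if_neg huv
  · intro x y hy hxy
    simp [hxy, hy]

theorem exists_mk_eq_of_isBipartiteWith (hG : G.IsBipartiteWith X Y) {e : Sym2 V}
    (he : e ∈ G.edgeSet) : ∃ x, ∃ y ∈ Y, G.Adj x y ∧ s(x, y) = e := by
  obtain ⟨u, v⟩ := e
  have hadj : G.Adj u v := he
  obtain ⟨-, hv⟩ | ⟨hu, -⟩ := hG.mem_of_adj hadj
  · exact ⟨u, v, hv, hadj, rfl⟩
  · exact ⟨v, u, hu, hadj.symm, Sym2.eq_swap⟩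

theorem mem_diff_starCentres_of_adj (hG : G.IsBipartiteWith X Y) (hy : y ∈ Y \ starCentres G Y)
    (hxy : G.Adj x y) {y' : V} (hxy' : G.Adj x y') : y' ∈ Y \ starCentres G Y := by
  refine ⟨hG.mem_of_mem_adj (hG.symm.mem_of_mem_adj hy.1 hxy.symm) hxy', fun hy' ↦ hy.2 ?_⟩
  rwa [hy'.2 x hxy' y hxy]

theorem exists_adj_ne_of_mem_diff_starCentres (hG : G.IsBipartiteWith X Y)
    (hy : y ∈ Y \ starCentres G Y) :
    ∃ x, G.Adj x y ∧ ∃ y' ∈ Y \ starCentres G Y, y' ≠ y ∧ G.Adj x y' := by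
  have hstar : ¬ ∀ x, G.Adj x y → ∀ y', G.Adj x y' → y' = y := fun h ↦ hy.2 ⟨hy.1, h⟩
  push Not at hstar
  obtain ⟨x, hxy, y', hxy', hne⟩ := hstar
  exact ⟨x, hxy, y', mem_diff_starCentres_of_adj hG hy hxy hxy', hne, hxy'⟩

theorem exists_forall_isGoodAt (hG : G.IsBipartiteWith X Y) (hY : ∀ y ∈ Y, ∃ x, G.Adj x y)
    (hEON : ∀ e ∈ G.edgeSet, (EON G e).Nonempty) :
    ∃ c, PartialColouring G c 3 ∧ ∀ y ∈ Y, IsGoodAt G c y := by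
  classical
  obtain ⟨stem, leaf, hub, hcover⟩ := exists_isSpiderCover fun y hy ↦
    exists_adj_ne_of_mem_diff_starCentres hG hy
  have htwo : ∀ z ∈ starCentres G Y, ∃ x₁ x₂, x₂ ≠ x₁ ∧ G.Adj x₁ z ∧ G.Adj x₂ z := by
    intro z hz
    obtain ⟨x, hx⟩ := hY z hz.1
    obtain ⟨x', hne, hx'⟩ := exists_adj_ne_of_nonempty_EON (hEON s(x, z) hx) (hz.2 x hx)
    exact ⟨x, x', hne, hx, hx'⟩
  choose! x₁ x₂ hne hx₁ hx₂ using htwo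
  obtain ⟨c, hnone, hc⟩ := exists_sym2_eq_of_isBipartiteWith hG fun x y ↦
    if y ∈ starCentres G Y then if x = x₁ y then some 0 else if x = x₂ y then some 1 else none
    else spiderColour (Y \ starCentres G Y) stem leaf hub x y
  refine ⟨c, fun e α hα ↦ ?_, fun y hy ↦ ?_⟩
  · have he : e ∈ G.edgeSet := by
      by_contra he
      simp [hnone e he] at hα
    obtain ⟨x, y, hy, hxy, rfl⟩ := exists_mk_eq_of_isBipartiteWith hG he
    rw [hc x y hy hxy] at hα
    refine ⟨he, ?_⟩
    split_ifs at hα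
    · cases hα; norm_num
    · cases hα; norm_num
    · exact spiderColour_lt_three hα
  · by_cases hz : y ∈ starCentres G Y
    · have hcz : ∀ x, G.Adj y x → c s(y, x) =
          if x = x₁ y then some 0 else if x = x₂ y then some 1 else none := fun x hyx ↦ by
        rw [Sym2.eq_swap, hc x y hy hyx.symm, if_pos hz]
      have hzero : IsUniqueColourAt G c y (x₁ y) 0 := ⟨(hx₁ y hz).symm, by grind⟩
      have hone : IsUniqueColourAt G c y (x₂ y) 1 := ⟨(hx₂ y hz).symm, by grind⟩
      exact isGoodAt_of_pendant hzero hone zero_ne_one hz.2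
    · exact hcover.isGoodAt
        (fun x y' hy' hxy' y'' hxy'' ↦ mem_diff_starCentres_of_adj hG hy' hxy' hxy'')
        (fun x y' hy' hxy' ↦ by rw [hc x y' hy'.1 hxy', if_neg hy'.2]) ⟨hy, hz⟩

end Colouring

theorem stmt3 {V : Type*} (G : SimpleGraph V) (X Y : Set V)
    (hpart : ∀ v, (v ∈ X ∧ v ∉ Y) ∨ (v ∈ Y ∧ v ∉ X))
    (hbip : ∀ u v, G.Adj u v → (u ∈ X ∧ v ∈ Y) ∨ (u ∈ Y ∧ v ∈ X))
    (hnoisovertex : ∀ v, (G.neighborSet v).Nonempty)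
    (hnoisoedge : ∀ e ∈ G.edgeSet, (EON G e).Nonempty) :
    ∃ c : Sym2 V → Option ℕ, PartialColouring G c 3 ∧
      (∀ e ∈ G.edgeSet, SatisfiedP G c e) ∧
      (∀ y ∈ Y, UniqueAt G c y) ∧
      (∀ x ∈ X, (∃ e ∈ G.incidenceSet x, (c e).isSome) → UniqueAt G c x) := by
  have hG : G.IsBipartiteWith X Y := by
    refine ⟨Set.disjoint_left.2 fun v hX hY ↦ ?_, hbip⟩
    exact (hpart v).elim (fun h ↦ h.2 hY) fun h ↦ h.2 hX
  obtain ⟨c, hc, hgood⟩ := exists_forall_isGoodAt hG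
    (fun y _ ↦ (hnoisovertex y).imp fun _ h ↦ h.symm) hnoisoedge
  refine ⟨c, hc, fun e he ↦ ?_, fun y hy ↦ (hgood y hy).1, ?_⟩
  · obtain ⟨x, y, hy, hxy, rfl⟩ := exists_mk_eq_of_isBipartiteWith hG he
    exact ((hgood y hy).2 x hxy).1
  · rintro x hx ⟨_, ⟨hxy, y, rfl⟩, hsome⟩
    exact ((hgood y (hG.mem_of_mem_adj hx hxy)).2 x hxy).2 hsome
end

section
/- For every bipartite graph G with no isolated edges and maximum degree at least 1, the open conflict-free chromatic index satisfies χ'_ocf(G) ≤ 4, and moreover there is an edge colouring of all edges with 4 colours that is simultaneously closed and open conflict-free. -/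
open SimpleGraph

/-!
Write the bipartite graph as a relation `r` between its sides. Run through the first side along a
well-order and keep a vertex `x` if it has a neighbour `y` with no earlier kept neighbour such that
`x` is either the only neighbour of `y` or not the first one. The kept vertices dominate the second
side, so assigning every `y` to its first kept neighbour cuts the second side into stars; the centre
of every star has a partner in its own star that either is adjacent to a discarded vertex or has
degree one.

Centre-partner edges get colour 1. A partner adjacent to discarded vertices gets colour 3 on one of
the edges leading there, and any other vertex adjacent to discarded vertices gets colour 2 on the
edge to its centre. A centre whose partner has degree one needs a second distinguished edge, whose
colour, 2 or 3, is the one not already reserved at its other end. All remaining edges get colour 0.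
-/

section WellOrder

variable {α β : Type*} [LinearOrder α]

/-- The vertices kept by the greedy construction of a dominating set for `β`, run along the
well-order of `α`. -/
def Kept [WellFoundedLT α] (r : α → β → Prop) (x : α) : Prop :=
  ∃ y, r x y ∧ (∀ x' < x, r x' y → ¬ Kept r x') ∧ ((∃ x' < x, r x' y) ∨ ∀ x', r x' y → x' = x)
termination_by wellFounded_lt.wrap x
decreasing_by assumption

variable [WellFoundedLT α] {r : α → β → Prop} {x : α} {y : β}

theorem exists_kept_of_rel (hxy : r x y) : ∃ x', Kept r x' ∧ r x' y := by
  by_contra! hnone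
  have not_later_or_only {x'} (hx' : r x' y) :
      ¬ ((∃ x'' < x', r x'' y) ∨ ∀ x'', r x'' y → x'' = x') :=
    fun h => hnone x' (by rw [Kept]; exact ⟨y, hx', fun _ _ hr hk => hnone _ hk hr, h⟩) hx'
  obtain ⟨x', hx', hne⟩ : ∃ x', r x' y ∧ x' ≠ x := by
    simpa using fun h => not_later_or_only hxy (Or.inr h)
  rcases hne.lt_or_gt with hlt | hlt
  · exact not_later_or_only hxy (Or.inl ⟨x', hlt, hx'⟩)
  · exact not_later_or_only hx' (Or.inl ⟨x, hlt, hxy⟩)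

theorem exists_isLeast_kept (hxy : r x y) : ∃ x', IsLeast {z | Kept r z ∧ r z y} x' :=
  ⟨_, WellFounded.min_mem wellFounded_lt _ (exists_kept_of_rel hxy),
    fun _ hz => WellFounded.min_le wellFounded_lt hz⟩

theorem Kept.exists_isLeast (hx : Kept r x) :
    ∃ y, IsLeast {z | Kept r z ∧ r z y} x ∧
      ((∃ x', ¬ Kept r x' ∧ r x' y) ∨ ∀ x', r x' y → x' = x) := by
  obtain ⟨y, hxy, hfirst, hy⟩ := by rwa [Kept] at hx
  refine ⟨y, ⟨⟨hx, hxy⟩, fun z hz => ?_⟩, hy.imp_left ?_⟩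
  · exact not_lt.1 fun hlt => hfirst z hlt hz.2 hz.1
  · exact fun ⟨x', hlt, hx'⟩ => ⟨x', hfirst x' hlt hx', hx'⟩

end WellOrder

/-- A partition of the non-isolated vertices of `β` into stars of `r` with centres in `α`, together
with a choice, for every centre, of a partner in its star. The values of `centre` at isolated
vertices and of `partner` outside `centres` are irrelevant. -/
structure StarCover {α β : Type*} (r : α → β → Prop) where
  centres : Set α
  centre : β → α
  partner : α → β
  centre_mem {x y} : r x y → centre y ∈ centres
  rel_centre {x y} : r x y → r (centre y) y
  rel_partner {x} : x ∈ centres → r x (partner x)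
  centre_partner {x} : x ∈ centres → centre (partner x) = x
  split_or_leaf {x} : x ∈ centres →
    (∃ x' ∉ centres, r x' (partner x)) ∨ ∀ x', r x' (partner x) → x' = x
  split_partner {y} : (∃ x ∉ centres, r x y) → ∃ x ∉ centres, r x (partner (centre y))

theorem nonempty_starCover {α β : Type*} [Nonempty α] [Nonempty β] (r : α → β → Prop) :
    Nonempty (StarCover r) := by
  obtain ⟨_, _⟩ := exists_wellFoundedLT α
  let Split (y : β) : Prop := ∃ x, ¬ Kept r x ∧ r x y
  choose! centre hcentre using fun y (hy : ∃ x, r x y) => exists_isLeast_kept hy.choose_spec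
  have exists_partner (x : α) (hx : Kept r x) : ∃ y, r x y ∧ centre y = x ∧
      (Split y ∨ ∀ x', r x' y → x' = x) ∧ ((∃ z, centre z = x ∧ Split z) → Split y) := by
    by_cases hsplit : ∃ y, centre y = x ∧ Split y
    · obtain ⟨y, rfl, hy⟩ := hsplit
      exact ⟨y, (hcentre y (hy.imp fun _ h => h.2)).1.2, rfl, Or.inl hy, fun _ => hy⟩
    · obtain ⟨y, hleast, hy⟩ := hx.exists_isLeast
      exact ⟨y, hleast.1.2, (hcentre y ⟨x, hleast.1.2⟩).unique hleast, hy,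
        fun h => (hsplit h).elim⟩
  choose! partner hrel hcentre_partner hleaf hsplit using exists_partner
  exact ⟨{
    centres := {x | Kept r x}
    centre := centre
    partner := partner
    centre_mem := fun h => (hcentre _ ⟨_, h⟩).1.1
    rel_centre := fun h => (hcentre _ ⟨_, h⟩).1.2
    rel_partner := hrel _
    centre_partner := hcentre_partner _
    split_or_leaf := hleaf _
    split_partner := fun {y} hy =>
      hsplit _ (hcentre y (hy.imp fun _ h => h.2)).1.1 ⟨y, rfl, hy⟩ }⟩

/-- The edge `x y'` is adjacent to the edge `x y` of the bipartite graph `r`, and the colour of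
`x y'` occurs neither on another edge at `x` nor on an edge at `y`. For an edge `x' y` in the role
of `x y'`, exchange the two sides with `flip`. -/
structure IsWitness {α β : Type*} (r : α → β → Prop) (c : α → β → ℕ) (x : α) (y y' : β) :
    Prop where
  rel : r x y'
  ne : y' ≠ y
  unique : ∀ z, r x z → c x z = c x y' → z = y'
  avoids : ∀ z, r z y → c z y ≠ c x y'

theorem IsWitness.congr {α β : Type*} {r r' : α → β → Prop} {c c' : α → β → ℕ} {x : α} {y y' : β}
    (h : IsWitness r c x y y') (hrow : ∀ z, r x z ↔ r' x z) (hcol : ∀ z, r z y ↔ r' z y)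
    (hcrow : ∀ z, r x z → c x z = c' x z) (hccol : ∀ z, r z y → c z y = c' z y) :
    IsWitness r' c' x y y' where
  rel := (hrow y').1 h.rel
  ne := h.ne
  unique z hz := by
    rw [← hrow] at hz
    rw [← hcrow z hz, ← hcrow y' h.rel]
    exact h.unique z hz
  avoids z hz := by
    rw [← hcol] at hz
    rw [← hccol z hz, ← hcrow y' h.rel]
    exact h.avoids z hz

/-- The edge `x y` has an adjacent edge whose colour occurs exactly once on the edges meeting
`x y`, counting `x y` itself. -/
def Satisfied {α β : Type*} (r : α → β → Prop) (c : α → β → ℕ) (x : α) (y : β) : Prop :=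
  (∃ y', IsWitness r c x y y') ∨ ∃ x', IsWitness (flip r) (flip c) y x x'

theorem Satisfied.congr {α β : Type*} {r r' : α → β → Prop} {c c' : α → β → ℕ} {x : α} {y : β}
    (h : Satisfied r c x y) (hrow : ∀ z, r x z ↔ r' x z) (hcol : ∀ z, r z y ↔ r' z y)
    (hcrow : ∀ z, r x z → c x z = c' x z) (hccol : ∀ z, r z y → c z y = c' z y) :
    Satisfied r' c' x y :=
  h.imp (fun ⟨y', h⟩ => ⟨y', h.congr hrow hcol hcrow hccol⟩)
    (fun ⟨x', h⟩ => ⟨x', h.congr hcol hrow hccol hcrow⟩)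

namespace StarCover

variable {α β : Type*} {r : α → β → Prop} (S : StarCover r) {x : α} {y : β}

/-- `y` has a neighbour that is not a centre, so that its edges are split between centres and
non-centres. -/
def Split (y : β) : Prop := ∃ x ∉ S.centres, r x y

/-- `y` is the partner of its centre. -/
def Matched (y : β) : Prop := S.partner (S.centre y) = y

/-- Colour 2 is not reserved at `y` for the edge to its centre. -/
def Soft (y : β) : Prop := S.Matched y ∨ ¬ S.Split y

/-- `y` may serve as the far end of the second distinguished edge at `x`. Soft ends take
precedence, so that colour 3 occurs at `x` only if no other vertex than the partner is soft. -/
def IsSpare (x : α) (y : β) : Prop :=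
  r x y ∧ y ≠ S.partner x ∧ ∀ z, r x z → z ≠ S.partner x → S.Soft z → S.Soft y

open Classical in
/-- A chosen neighbour of `y` outside the centres, if there is one; otherwise a junk value. -/
noncomputable def outer (y : β) : α :=
  if h : S.Split y then h.choose else S.centre y

open Classical in
/-- A chosen spare neighbour of `x`, if there is one; otherwise a junk value. -/
noncomputable def spare (x : α) : β :=
  if h : ∃ y, S.IsSpare x y then h.choose else S.partner x

open Classical in
/-- The colouring of the edges of `r` derived from a star cover. -/
noncomputable def colour (x : α) (y : β) : ℕ :=
  if x ∈ S.centres then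
    if y = S.partner x then 1
    else if ¬ S.Split (S.partner x) ∧ y = S.spare x then if S.Soft y then 2 else 3
    else if x = S.centre y ∧ ¬ S.Soft y then 2
    else 0
  else if S.Matched y ∧ x = S.outer y then 3
  else 0

variable {S}

theorem matched_partner (hx : x ∈ S.centres) : S.Matched (S.partner x) := by
  rw [Matched, S.centre_partner hx]

theorem Split.rel_centre (hy : S.Split y) : r (S.centre y) y :=
  S.rel_centre hy.choose_spec.2

theorem Split.centre_mem (hy : S.Split y) : S.centre y ∈ S.centres :=
  S.centre_mem hy.choose_spec.2

theorem Split.outer_notMem (hy : S.Split y) : S.outer y ∉ S.centres := by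
  rw [outer, dif_pos hy]
  exact hy.choose_spec.1

theorem Split.rel_outer (hy : S.Split y) : r (S.outer y) y := by
  rw [outer, dif_pos hy]
  exact hy.choose_spec.2

theorem Matched.split_of_rel (hy : S.Matched y) (hxy : r x y) (hne : y ≠ S.partner x) :
    S.Split y := by
  have hor := S.split_or_leaf (S.centre_mem hxy)
  rw [hy] at hor
  exact hor.resolve_right fun hleaf => hne (by rw [hleaf x hxy, hy])

theorem isSpare_spare (hxy : r x y) (hne : y ≠ S.partner x) : S.IsSpare x (S.spare x) := by
  have hex : ∃ z, S.IsSpare x z := by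
    by_cases hsoft : ∃ z, r x z ∧ z ≠ S.partner x ∧ S.Soft z
    · obtain ⟨z, hxz, hz, hs⟩ := hsoft
      exact ⟨z, hxz, hz, fun _ _ _ _ => hs⟩
    · exact ⟨y, hxy, hne, fun z hxz hz hs => (hsoft ⟨z, hxz, hz, hs⟩).elim⟩
  rw [spare, dif_pos hex]
  exact hex.choose_spec

theorem colour_lt_four (x : α) (y : β) : S.colour x y < 4 := by
  grind [colour]

theorem colour_eq_one_iff : S.colour x y = 1 ↔ x ∈ S.centres ∧ y = S.partner x := by
  grind [colour]

theorem colour_eq_two_iff (hy : ¬ S.Soft y) : S.colour x y = 2 ↔ x = S.centre y := by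
  obtain ⟨hmatched, hsplit⟩ := by simpa only [Soft, not_or, not_not] using hy
  constructor
  · grind [colour]
  · rintro rfl
    have hne : y ≠ S.partner (S.centre y) := fun h => hmatched h.symm
    have hpartner : S.Split (S.partner (S.centre y)) := S.split_partner hsplit
    simp only [colour, hsplit.centre_mem, hne, hpartner, hy, if_true, if_false, not_true,
      not_false_iff, false_and, and_self]

theorem mem_centres_of_colour_eq_two (h : S.colour x y = 2) : x ∈ S.centres := by
  grind [colour]

theorem colour_eq_three_iff (hy : S.Soft y) : S.colour x y = 3 ↔
    x ∉ S.centres ∧ S.Matched y ∧ x = S.outer y := by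
  grind [colour]

theorem isSpare_of_colour_eq_three (hx : x ∈ S.centres) (hxy : r x y) (h : S.colour x y = 3) :
    ¬ S.Split (S.partner x) ∧ S.IsSpare x y ∧ ¬ S.Soft y := by
  obtain ⟨hne, hpartner, hspare, hsoft⟩ :
      y ≠ S.partner x ∧ ¬ S.Split (S.partner x) ∧ y = S.spare x ∧ ¬ S.Soft y := by
    grind [colour]
  exact ⟨hpartner, hspare ▸ isSpare_spare hxy hne, hsoft⟩

theorem colour_lt_two (hx : x ∈ S.centres) (hpartner : ¬ S.Split (S.partner x))
    (hne : y ≠ S.spare x) : S.colour x y < 2 := by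
  have soft_of_eq_centre (h : x = S.centre y) : S.Soft y :=
    Or.inr fun hy => hpartner (h ▸ S.split_partner hy)
  grind [colour]

theorem satisfied_of_notMem_centres (hxy : r x y) (hx : x ∉ S.centres) :
    Satisfied r S.colour x y := by
  have hy : S.Split y := ⟨x, hx, hxy⟩
  have hne : S.centre y ≠ x := fun h => hx (h ▸ hy.centre_mem)
  by_cases hmatched : S.Matched y
  · have hone : S.colour (S.centre y) y = 1 := colour_eq_one_iff.2 ⟨hy.centre_mem, hmatched.symm⟩
    refine Or.inr ⟨S.centre y, hy.rel_centre, hne, fun z _ h => ?_, fun z _ h => ?_⟩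
    · obtain ⟨hz, rfl⟩ := colour_eq_one_iff.1 (h.trans hone)
      exact (S.centre_partner hz).symm
    · exact hx (colour_eq_one_iff.1 (h.trans hone)).1
  · have hsoft : ¬ S.Soft y := not_or.2 ⟨hmatched, not_not.2 hy⟩
    have htwo : S.colour (S.centre y) y = 2 := (colour_eq_two_iff hsoft).2 rfl
    exact Or.inr ⟨S.centre y, hy.rel_centre, hne,
      fun z _ h => (colour_eq_two_iff hsoft).1 (h.trans htwo),
      fun z _ h => hx (mem_centres_of_colour_eq_two (h.trans htwo))⟩

theorem satisfied_of_not_matched (hxy : r x y) (hx : x ∈ S.centres) (hy : ¬ S.Matched y) :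
    Satisfied r S.colour x y := by
  have hone : S.colour x (S.partner x) = 1 := colour_eq_one_iff.2 ⟨hx, rfl⟩
  refine Or.inl ⟨S.partner x, S.rel_partner hx, fun h => hy (h ▸ matched_partner hx),
    fun z _ h => (colour_eq_one_iff.1 (h.trans hone)).2, fun z _ h => hy ?_⟩
  obtain ⟨hz, rfl⟩ := colour_eq_one_iff.1 (h.trans hone)
  exact matched_partner hz

theorem satisfied_of_matched_of_split (hx : x ∈ S.centres) (hmatched : S.Matched y)
    (hsplit : S.Split y) (hthree : ∀ z, r x z → S.colour x z ≠ 3) : Satisfied r S.colour x y := by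
  have three_iff (z : α) := colour_eq_three_iff (S := S) (x := z) (Or.inl hmatched)
  have houter : S.colour (S.outer y) y = 3 := (three_iff _).2 ⟨hsplit.outer_notMem, hmatched, rfl⟩
  exact Or.inr ⟨S.outer y, hsplit.rel_outer, fun h => hsplit.outer_notMem (h ▸ hx),
    fun z _ h => ((three_iff z).1 (h.trans houter)).2.2, fun z hz h => hthree z hz (h.trans houter)⟩

theorem satisfied_of_matched_of_ne_partner (hxy : r x y) (hx : x ∈ S.centres)
    (hy : S.Matched y) (hne : y ≠ S.partner x) : Satisfied r S.colour x y :=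
  satisfied_of_matched_of_split hx hy (hy.split_of_rel hxy hne) fun _ hz h =>
    have ⟨_, hspare, hsoft⟩ := isSpare_of_colour_eq_three hx hz h
    hsoft (hspare.2.2 y hxy hne (Or.inl hy))

theorem satisfied_partner_of_split (hx : x ∈ S.centres) (hsplit : S.Split (S.partner x)) :
    Satisfied r S.colour x (S.partner x) :=
  satisfied_of_matched_of_split hx (matched_partner hx) hsplit fun _ hz h =>
    (isSpare_of_colour_eq_three hx hz h).1 hsplit

theorem satisfied_partner_of_not_split (hx : x ∈ S.centres) (hsplit : ¬ S.Split (S.partner x))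
    (hadj : (∃ z ≠ S.partner x, r x z) ∨ ∃ z ≠ x, r z (S.partner x)) :
    Satisfied r S.colour x (S.partner x) := by
  have hleaf : ∀ z, r z (S.partner x) → z = x := (S.split_or_leaf hx).resolve_left hsplit
  obtain ⟨y, hne, hxy⟩ := hadj.resolve_right fun ⟨z, hne, hz⟩ => hne (hleaf z hz)
  obtain ⟨hspare, hspare_ne, -⟩ := isSpare_spare hxy hne
  have htwo : 2 ≤ S.colour x (S.spare x) := by grind [colour]
  refine Or.inl ⟨S.spare x, hspare, hspare_ne, fun z _ h => ?_, fun z hz h => ?_⟩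
  · by_contra hz
    exact absurd (colour_lt_two hx hsplit hz) (by lia)
  · obtain rfl := hleaf z hz
    have hone : S.colour z (S.partner z) = 1 := colour_eq_one_iff.2 ⟨hx, rfl⟩
    lia

theorem satisfied_colour (hxy : r x y) (hadj : (∃ z ≠ y, r x z) ∨ ∃ z ≠ x, r z y) :
    Satisfied r S.colour x y := by
  by_cases hx : x ∈ S.centres
  · by_cases hy : y = S.partner x
    · subst hy
      by_cases hsplit : S.Split (S.partner x)
      · exact satisfied_partner_of_split hx hsplit
      · exact satisfied_partner_of_not_split hx hsplit hadj
    · by_cases hmatched : S.Matched y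
      · exact satisfied_of_matched_of_ne_partner hxy hx hmatched hy
      · exact satisfied_of_not_matched hxy hx hmatched
  · exact satisfied_of_notMem_centres hxy hx

end StarCover

theorem exists_satisfied_colouring {α β : Type*} (r : α → β → Prop) :
    ∃ c : α → β → ℕ, (∀ x y, c x y < 4) ∧
      ∀ x y, r x y → ((∃ z ≠ y, r x z) ∨ ∃ z ≠ x, r z y) → Satisfied r c x y := by
  by_cases hne : Nonempty α ∧ Nonempty β
  · obtain ⟨_, _⟩ := hne
    obtain ⟨S⟩ := nonempty_starCover r
    exact ⟨S.colour, StarCover.colour_lt_four, fun _ _ => StarCover.satisfied_colour⟩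
  · exact ⟨0, fun _ _ => four_pos, fun x y => (hne ⟨⟨x⟩, ⟨y⟩⟩).elim⟩

/-- The colouring of unordered pairs induced by a colouring `c` of the pairs with first entry in
`s`. On a pair with both or no entries in `s` its value is irrelevant. -/
noncomputable def sym2Colouring {V : Type*} (s : Set V) (c : V → V → ℕ) : Sym2 V → ℕ :=
  Sym2.lift ⟨fun u v => s.indicator (c · v) u + s.indicator (c · u) v, fun _ _ => add_comm _ _⟩

theorem sym2Colouring_mk {V : Type*} {s : Set V} {u v : V} (c : V → V → ℕ) (hu : u ∈ s)
    (hv : v ∉ s) : sym2Colouring s c s(u, v) = c u v := by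
  simp [sym2Colouring, hu, hv]

section Graph

variable {V : Type*} {G : SimpleGraph V} {c : Sym2 V → ℕ} {k : ℕ} {u v : V}

theorem IsWitness.exists_mem_EON {w : V} (h : IsWitness G.Adj (fun a b => c s(a, b)) u v w) :
    ∃ e' ∈ EON G s(u, v), ∀ f ∈ ECN G s(u, v), c f = c e' → f = e' := by
  have hne : s(u, w) ≠ s(u, v) := fun h' => h.ne (Sym2.congr_right.1 h')
  refine ⟨s(u, w), ⟨⟨h.rel, u, Sym2.mem_mk_left u w, Sym2.mem_mk_left u v⟩, hne⟩, ?_⟩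
  rintro f ⟨hf, a, haf, ha⟩ hcf
  obtain ⟨z, rfl⟩ := Sym2.mem_iff_exists.1 haf
  rcases Sym2.mem_iff.1 ha with rfl | rfl
  · rw [h.unique z hf hcf]
  · rw [Sym2.eq_swap] at hcf
    exact (h.avoids z hf.symm hcf).elim

theorem Satisfied.exists_mem_EON (h : Satisfied G.Adj (fun a b => c s(a, b)) u v) :
    ∃ e' ∈ EON G s(u, v), ∀ f ∈ ECN G s(u, v), c f = c e' → f = e' := by
  have flip_adj : flip G.Adj = G.Adj := by ext a b; exact G.adj_comm b a
  have flip_c : (flip fun a b => c s(a, b)) = fun a b => c s(a, b) := by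
    ext a b; exact congrArg c Sym2.eq_swap
  rcases h with ⟨w, hw⟩ | ⟨w, hw⟩
  · exact hw.exists_mem_EON
  · rw [flip_adj, flip_c] at hw
    rw [Sym2.eq_swap]
    exact hw.exists_mem_EON

theorem exists_adj_of_EON_nonempty (h : (EON G s(u, v)).Nonempty) :
    (∃ w ≠ v, G.Adj u w) ∨ ∃ w ≠ u, G.Adj w v := by
  obtain ⟨f, ⟨hf, a, haf, ha⟩, hne⟩ := h
  obtain ⟨z, rfl⟩ := Sym2.mem_iff_exists.1 haf
  rcases Sym2.mem_iff.1 ha with rfl | rfl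
  · exact Or.inl ⟨z, fun h => hne (by rw [h]; rfl), hf⟩
  · exact Or.inr ⟨z, fun h => hne (by rw [h, Sym2.eq_swap]; rfl), hf.symm⟩

theorem ConflictFree.closedCF (h : ConflictFree G c k) : ClosedCF G c k := by
  refine ⟨h.1, fun e he => ?_⟩
  by_cases hne : (EON G e).Nonempty
  · obtain ⟨e', he', hunique⟩ := h.2 e he hne
    exact ⟨c e', e', ⟨he'.1, rfl⟩, fun f hf => hunique f hf.1 hf.2⟩
  · have hself : e ∈ ECN G e := ⟨he, _, e.out_fst_mem, e.out_fst_mem⟩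
    exact ⟨c e, e, ⟨hself, rfl⟩, fun f hf => by_contra fun hfe => hne ⟨f, hf.1, hfe⟩⟩

theorem ConflictFree.openCF (h : ConflictFree G c k) : OpenCF G c k := by
  refine ⟨h.1, fun e he hne => ?_⟩
  obtain ⟨e', he', hunique⟩ := h.2 e he hne
  exact ⟨c e', e', ⟨he', rfl⟩, fun f hf => hunique f hf.1.1 hf.2⟩

theorem exists_eq_mk_of_mem_edgeSet {s t : Set V} (hst : G.IsBipartiteWith s t) {e : Sym2 V}
    (he : e ∈ G.edgeSet) : ∃ u ∈ s, ∃ v ∈ t, G.Adj u v ∧ e = s(u, v) := by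
  induction e with | _ u v
  rcases hst.mem_of_adj he with ⟨hu, hv⟩ | ⟨hu, hv⟩
  · exact ⟨u, hu, v, hv, he, rfl⟩
  · exact ⟨v, hv, u, hu, he.symm, Sym2.eq_swap⟩

theorem Satisfied.to_sym2Colouring {s t : Set V} {c : V → V → ℕ} (hst : G.IsBipartiteWith s t)
    (hu : u ∈ s) (hv : v ∈ t) (h : Satisfied (fun a b => a ∈ s ∧ G.Adj a b) c u v) :
    Satisfied G.Adj (fun a b => sym2Colouring s c s(a, b)) u v := by
  have notMem {a} (ha : a ∈ t) : a ∉ s := hst.disjoint.notMem_of_mem_right ha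
  refine h.congr (fun z => and_iff_right hu) (fun z => ?_) (fun z hz => ?_) (fun z hz => ?_)
  · exact and_iff_right_of_imp fun hz => hst.symm.mem_of_mem_adj hv hz.symm
  · exact (sym2Colouring_mk c hu (notMem (hst.mem_of_mem_adj hu hz.2))).symm
  · exact (sym2Colouring_mk c hz.1 (notMem hv)).symm

theorem stmt4_general (hG : G.Colorable 2) : ∃ c : Sym2 V → ℕ, ConflictFree G c 4 := by
  obtain ⟨s, t, hst⟩ := isBipartite_iff_exists_isBipartiteWith.1 hG
  obtain ⟨c, hlt, hc⟩ := exists_satisfied_colouring fun u v => u ∈ s ∧ G.Adj u v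
  refine ⟨sym2Colouring s c, fun e he => ?_, fun e he hne => ?_⟩ <;>
    obtain ⟨u, hu, v, hv, huv, rfl⟩ := exists_eq_mk_of_mem_edgeSet hst he
  · rw [sym2Colouring_mk c hu (hst.disjoint.notMem_of_mem_right hv)]
    exact hlt u v
  · refine ((hc u v ⟨hu, huv⟩ ?_).to_sym2Colouring hst hu hv).exists_mem_EON
    exact (exists_adj_of_EON_nonempty hne).imp
      (fun ⟨w, hw, huw⟩ => ⟨w, hw, hu, huw⟩)
      (fun ⟨w, hw, hwv⟩ => ⟨w, hw, hst.symm.mem_of_mem_adj hv hwv.symm, hwv⟩)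

end Graph

theorem stmt4 {V : Type*} (G : SimpleGraph V) (hbip : G.Colorable 2)
    (hnoisoedge : ∀ e ∈ G.edgeSet, (EON G e).Nonempty)
    (hΔ : G.edgeSet.Nonempty) :
    ocfIndex G ≤ 4 ∧
    ∃ c : Sym2 V → ℕ, ClosedCF G c 4 ∧ OpenCF G c 4 := by
  obtain ⟨c, hc⟩ := stmt4_general hbip
  exact ⟨Nat.sInf_le ⟨c, hc.openCF⟩, c, hc.closedCF, hc.openCF⟩
end

section
/- For every α ≥ 1, every graph G with chromatic number at most α admits a partial edge colouring using at most 3⌈log₂ α⌉ colours such that all edges of G are satisfied, except possibly for a set M of uncoloured edges forming a matching. -/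
open SimpleGraph

/-!
Take a Grundy colouring `f` of `G` with values below `α`, and let the level of an edge be the
position of the highest binary digit in which `f` differs at its two ends. There are at most
`⌈log₂ α⌉` levels, and level `i` is bipartite with parts `A` and `B`, where digit `i` of `f` is `0`
on `A` and `1` on `B`. As different levels use disjoint palettes, it suffices to satisfy each level
with three colours.

In a level, choose a maximal family of disjoint cherries (paths with two edges) centred in `A`, and
extend them to disjoint stars covering all neighbours of their centres. By maximality a vertex of
`A` that is not a centre has at most one uncovered neighbour. Hence, apart from the stars, at each
uncovered vertex `s ∈ B` it is enough to colour one edge together with one leading on to a leaf, or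
else two edges. This can fail only if `s` has degree one, so the exceptional edges form a matching
and have an end of degree one in `B`.

Finally, if digit `i` of `f v` is `1` and `0 < d` has highest digit `i`, the nim-sum of `f v` and
`d` is smaller than `f v`, so the Grundy property gives a neighbour of `v` with this colour, and it
is a neighbour in level `i`. For `i ≥ 1` there are several such `d`, so that `v` has at least two
neighbours in level `i`, and only level `0` has exceptional edges.
-/

section Satisfaction

variable {V : Type*} {G : SimpleGraph V}

lemma satisfiedP_of_existsUnique {c : Sym2 V → Option ℕ} {u v : V} {i : ℕ}
    (hu : ∃! w, G.Adj u w ∧ c s(u, w) = some i)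
    (hv : ∀ w, G.Adj v w → c s(v, w) ≠ some i) : SatisfiedP G c s(u, v) := by
  obtain ⟨w, ⟨huw, hcw⟩, hunique⟩ := hu
  have hne : s(u, w) ≠ s(u, v) := fun h ↦ by
    rw [h, Sym2.eq_swap] at hcw
    have huv : s(u, v) ∈ G.edgeSet := h ▸ huw
    exact hv u (G.mem_edgeSet.mp huv).symm hcw
  refine ⟨s(u, w), ⟨⟨huw, u, by simp, by simp⟩, hne⟩, i, hcw, ?_⟩
  rintro f ⟨hf, z, hzf, hz⟩ hcf
  obtain ⟨z', rfl⟩ := hzf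
  rcases Sym2.mem_iff.mp hz with rfl | rfl
  · rw [hunique z' ⟨hf, hcf⟩]
  · exact absurd hcf (hv z' hf)

/-- The sufficient condition for an edge to be satisfied that is used for bipartite graphs: some
colour occurs exactly once at one of the ends `a`, `b` and nowhere at the other. Here `K a b i`
stands for the edge from `a` to `b` having colour `i`, with `a` always in the left part. -/
def IsDistinguished {V : Type*} (K : V → V → ℕ → Prop) (a b : V) : Prop :=
  ∃ i, ((∃! b', K a b' i) ∧ ∀ a', ¬K a' b i) ∨ ((∃! a', K a' b i) ∧ ∀ b', ¬K a b' i)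

lemma exists_option_eq_some_iff {γ : Type*} (P : γ → Prop) (hP : ∀ i j, P i → P j → i = j) :
    ∃ o : Option γ, ∀ i, o = some i ↔ P i := by
  by_cases h : ∃ i, P i
  · obtain ⟨i, hi⟩ := h
    exact ⟨some i, fun j ↦ ⟨fun hj ↦ Option.some_inj.mp hj ▸ hi, fun hj ↦ by rw [hP i j hi hj]⟩⟩
  · exact ⟨none, fun i ↦ ⟨nofun, fun hi ↦ absurd ⟨i, hi⟩ h⟩⟩

section Bipartite

variable {A B : Set V} {K : V → V → ℕ → Prop}

lemma exists_partialColouring_of_relation {k : ℕ} (hG : G.IsBipartiteWith A B)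
    (hmem : ∀ a b i, K a b i → a ∈ A) (hadj : ∀ a b i, K a b i → G.Adj a b)
    (hlt : ∀ a b i, K a b i → i < k) (hfun : ∀ a b i j, K a b i → K a b j → i = j) :
    ∃ c, PartialColouring G c k ∧ ∀ a ∈ A, ∀ b i, c s(a, b) = some i ↔ K a b i := by
  have hA {a b a' b' : V} {i : ℕ} (ha : a ∈ A) (h : K a' b' i) (he : s(a, b) = s(a', b')) :
      a' = a ∧ b' = b := by
    rcases Sym2.eq_iff.mp he with ⟨rfl, rfl⟩ | ⟨rfl, rfl⟩
    · exact ⟨rfl, rfl⟩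
    · exact absurd (hG.mem_of_mem_adj (hmem _ _ _ h) (hadj _ _ _ h))
        (hG.disjoint.notMem_of_mem_left ha)
  have hex (e : Sym2 V) : ∃ o : Option ℕ, ∀ i, o = some i ↔ ∃ a b, e = s(a, b) ∧ K a b i := by
    refine exists_option_eq_some_iff _ ?_
    rintro i j ⟨a, b, rfl, hi⟩ ⟨a', b', he, hj⟩
    obtain ⟨rfl, rfl⟩ := hA (hmem _ _ _ hi) hj he
    exact hfun _ _ _ _ hi hj
  choose c hc using hex
  refine ⟨c, fun e i h ↦ ?_, fun a ha b i ↦ ⟨fun h ↦ ?_, fun h ↦ (hc _ _).mpr ⟨a, b, rfl, h⟩⟩⟩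
  · obtain ⟨a, b, rfl, hK⟩ := (hc e i).mp h
    exact ⟨hadj _ _ _ hK, hlt _ _ _ hK⟩
  · obtain ⟨a', b', he, hK⟩ := (hc _ _).mp h
    obtain ⟨rfl, rfl⟩ := hA ha hK he
    exact hK

lemma IsDistinguished.satisfiedP {c : Sym2 V → Option ℕ} {a b : V} (h : IsDistinguished K a b)
    (hG : G.IsBipartiteWith A B) (hadj : ∀ a b i, K a b i → G.Adj a b)
    (hc : ∀ a ∈ A, ∀ b i, c s(a, b) = some i ↔ K a b i) (ha : a ∈ A) (hb : b ∈ B) :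
    SatisfiedP G c s(a, b) := by
  have hleft (w : V) (i : ℕ) : G.Adj a w ∧ c s(a, w) = some i ↔ K a w i := by
    rw [hc a ha]
    exact ⟨And.right, fun h ↦ ⟨hadj _ _ _ h, h⟩⟩
  have hright (w : V) (i : ℕ) : G.Adj b w ∧ c s(b, w) = some i ↔ K w b i := by
    rw [G.adj_comm, Sym2.eq_swap]
    exact ⟨fun h ↦ (hc w (hG.mem_of_mem_adj' hb h.1) b i).mp h.2, fun h ↦
      ⟨hadj _ _ _ h, (hc w (hG.mem_of_mem_adj' hb (hadj _ _ _ h)) b i).mpr h⟩⟩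
  obtain ⟨i, ⟨hunique, habsent⟩ | ⟨hunique, habsent⟩⟩ := h
  · exact satisfiedP_of_existsUnique (by simpa only [hleft] using hunique)
      fun w hw hcw ↦ habsent w ((hright w i).mp ⟨hw, hcw⟩)
  · rw [Sym2.eq_swap]
    exact satisfiedP_of_existsUnique (by simpa only [hright] using hunique)
      fun w hw hcw ↦ habsent w ((hleft w i).mp ⟨hw, hcw⟩)

end Bipartite

/-- `M` is a matching of edges left uncoloured by `c`, and `c` satisfies every edge outside `M`. -/
structure IsExceptionalMatching (G : SimpleGraph V) (c : Sym2 V → Option ℕ)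
    (M : Set (Sym2 V)) : Prop where
  subset : M ⊆ G.edgeSet
  disjoint : ∀ e ∈ M, ∀ f ∈ M, e ≠ f → ∀ v : V, ¬(v ∈ e ∧ v ∈ f)
  uncoloured : ∀ e ∈ M, c e = none
  satisfied : ∀ e ∈ G.edgeSet, e ∉ M → SatisfiedP G c e

end Satisfaction

section Fibre

variable {V : Type*} {G : SimpleGraph V} {ℓ : Sym2 V → ℕ}

/-- The subgraph of the edges of level `i`, for a level function `ℓ` on unordered pairs. -/
def fibreGraph (G : SimpleGraph V) (ℓ : Sym2 V → ℕ) (i : ℕ) : SimpleGraph V where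
  Adj u v := G.Adj u v ∧ ℓ s(u, v) = i
  symm := ⟨fun u _ h ↦ ⟨h.1.symm, Sym2.eq_swap (a := u) ▸ h.2⟩⟩
  loopless := ⟨fun _ h ↦ h.1.ne rfl⟩

lemma mem_edgeSet_fibreGraph {i : ℕ} {e : Sym2 V} :
    e ∈ (fibreGraph G ℓ i).edgeSet ↔ e ∈ G.edgeSet ∧ ℓ e = i :=
  e.ind fun _ _ ↦ Iff.rfl

/-- Combines colourings of the levels of `ℓ` into one colouring, giving level `i` the palette
`m * i, …, m * i + m - 1`. -/
def glueColouring (m : ℕ) (ℓ : Sym2 V → ℕ) (c : ℕ → Sym2 V → Option ℕ) (e : Sym2 V) : Option ℕ :=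
  (c (ℓ e) e).map (m * ℓ e + ·)

variable {m : ℕ} {c : ℕ → Sym2 V → Option ℕ}

lemma partialColouring_glueColouring {k : ℕ}
    (hc : ∀ i, PartialColouring (fibreGraph G ℓ i) (c i) m) (hℓ : ∀ e ∈ G.edgeSet, ℓ e < k) :
    PartialColouring G (glueColouring m ℓ c) (m * k) := by
  intro e n hn
  obtain ⟨x, hx, rfl⟩ := Option.map_eq_some_iff.mp hn
  obtain ⟨he, hxm⟩ := hc _ e x hx
  have heG : e ∈ G.edgeSet := (mem_edgeSet_fibreGraph.mp he).1
  refine ⟨heG, ?_⟩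
  calc m * ℓ e + x < m * ℓ e + m := by gcongr
    _ = m * (ℓ e + 1) := by ring
    _ ≤ m * k := by gcongr; exact hℓ e heG

lemma satisfiedP_glueColouring {i : ℕ} {e : Sym2 V}
    (hc : ∀ i, PartialColouring (fibreGraph G ℓ i) (c i) m)
    (h : SatisfiedP (fibreGraph G ℓ i) (c i) e) : SatisfiedP G (glueColouring m ℓ c) e := by
  obtain ⟨e', ⟨⟨he', hmeet⟩, hne⟩, x, hx, hunique⟩ := h
  obtain ⟨he'G, rfl⟩ := mem_edgeSet_fibreGraph.mp he'
  refine ⟨e', ⟨⟨he'G, hmeet⟩, hne⟩, m * ℓ e' + x, by simp [glueColouring, hx], ?_⟩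
  rintro f ⟨-, hmeetf⟩ hf
  obtain ⟨y, hy, hxy⟩ := Option.map_eq_some_iff.mp hf
  obtain ⟨hfmem, hym⟩ := hc _ f y hy
  have hxm : x < m := (hc _ e' x hx).2
  have hlevel : ℓ f = ℓ e' := by
    have := congrArg (· / m) hxy
    simpa [Nat.mul_add_div (Nat.zero_lt_of_lt hxm), Nat.div_eq_of_lt hxm,
      Nat.div_eq_of_lt hym] using this
  rw [hlevel] at hfmem hy hxy
  obtain rfl : y = x := Nat.add_left_cancel hxy
  exact hunique f ⟨hfmem, hmeetf⟩ hy

lemma isExceptionalMatching_glueColouring {M : ℕ → Set (Sym2 V)} {j : ℕ}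
    (hc : ∀ i, PartialColouring (fibreGraph G ℓ i) (c i) m)
    (hM : ∀ i, IsExceptionalMatching (fibreGraph G ℓ i) (c i) (M i))
    (hempty : ∀ i, i ≠ j → M i = ∅) :
    IsExceptionalMatching G (glueColouring m ℓ c) (M j) where
  subset e he := (mem_edgeSet_fibreGraph.mp ((hM j).subset he)).1
  disjoint := (hM j).disjoint
  uncoloured e he := by
    obtain ⟨-, hj⟩ := mem_edgeSet_fibreGraph.mp ((hM j).subset he)
    simp [glueColouring, hj, (hM j).uncoloured e he]
  satisfied e he heM := by
    refine satisfiedP_glueColouring hc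
      ((hM (ℓ e)).satisfied e (mem_edgeSet_fibreGraph.mpr ⟨he, rfl⟩) ?_)
    by_cases hj : ℓ e = j
    · rwa [hj]
    · simp [hempty _ hj]

end Fibre

section Grundy

variable {V : Type*} {G : SimpleGraph V}

/-- A colouring by natural numbers is a Grundy colouring if every vertex sees all smaller colours
on its neighbours. -/
def IsGrundy (f : G.Coloring ℕ) : Prop :=
  ∀ ⦃v n⦄, n < f v → ∃ u, G.Adj v u ∧ f u = n

/-- The first-fit recolouring of `C`: vertices are processed in the order of their `C`-colours, and
each receives the least colour not yet used on its neighbours. -/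
noncomputable def firstFit (C : G.Coloring ℕ) (v : V) : ℕ :=
  sInf {n | ∀ u, G.Adj v u → C u < C v → firstFit C u ≠ n}
termination_by C v

lemma firstFit_le (C : G.Coloring ℕ) (v : V) : firstFit C v ≤ C v := by
  induction hn : C v using Nat.strong_induction_on generalizing v with
  | _ n ih =>
    rw [firstFit]
    refine Nat.sInf_le fun u _ hu ↦ ?_
    have := ih (C u) (hn ▸ hu) u rfl
    lia

lemma firstFit_ne_of_lt (C : G.Coloring ℕ) {u v : V} (hadj : G.Adj v u) (hlt : C u < C v) :
    firstFit C u ≠ firstFit C v := by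
  have hne : {n | ∀ u, G.Adj v u → C u < C v → firstFit C u ≠ n}.Nonempty :=
    ⟨C v, fun u _ hu ↦ ((firstFit_le C u).trans_lt hu).ne⟩
  have hmem := Nat.sInf_mem hne
  rw [← firstFit] at hmem
  exact hmem u hadj hlt

lemma exists_isGrundy_le (C : G.Coloring ℕ) :
    ∃ f : G.Coloring ℕ, IsGrundy f ∧ ∀ v, f v ≤ C v := by
  have hvalid {u v : V} (huv : G.Adj u v) : firstFit C u ≠ firstFit C v := by
    rcases (C.valid huv).lt_or_gt with h | h
    · exact firstFit_ne_of_lt C huv.symm h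
    · exact (firstFit_ne_of_lt C huv h).symm
  refine ⟨Coloring.mk (firstFit C) hvalid, fun v n hn ↦ ?_, firstFit_le C⟩
  change n < firstFit C v at hn
  rw [firstFit] at hn
  have := Nat.notMem_of_lt_sInf hn
  simp only [Set.mem_ofPred_eq, not_forall, not_not] at this
  obtain ⟨u, hadj, -, hu⟩ := this
  exact ⟨u, hadj, hu⟩

end Grundy

section BinaryLevel

lemma xor_lt_self_of_testBit_log2 {n d : ℕ} (hd : d ≠ 0) (h : n.testBit d.log2 = true) :
    n ^^^ d < n := by
  refine Nat.lt_of_testBit d.log2 ?_ h fun j hj ↦ ?_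
  · simp [h, Nat.testBit_log2 hd]
  · have : d < 2 ^ j := (Nat.log2_lt hd).mp hj
    simp [Nat.testBit_lt_two_pow this]

variable {V : Type*} {G : SimpleGraph V}

/-- The position of the highest bit in which the `f`-values of the two ends of a pair differ (`0` if
the values agree). -/
def bitLevel (f : V → ℕ) : Sym2 V → ℕ :=
  Sym2.lift ⟨fun u v ↦ (f u ^^^ f v).log2, fun _ _ ↦ congrArg Nat.log2 (Nat.xor_comm _ _)⟩

lemma bitLevel_lt (f : G.Coloring ℕ) {k : ℕ} (hf : ∀ v, f v < 2 ^ k) {e : Sym2 V}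
    (he : e ∈ G.edgeSet) : bitLevel f e < k := by
  induction e with
  | _ u v =>
    exact (Nat.log2_lt (Nat.xor_ne_zero_iff.mpr (f.valid he))).mpr
      (Nat.xor_lt_two_pow (hf u) (hf v))

lemma isBipartiteWith_fibreGraph_bitLevel (f : G.Coloring ℕ) (i : ℕ) :
    (fibreGraph G (bitLevel f) i).IsBipartiteWith
      {v | (f v).testBit i = false} {v | (f v).testBit i = true} where
  disjoint := Set.disjoint_left.mpr fun v (h : _ = false) (h' : _ = true) ↦ by simp [h] at h'
  mem_of_adj u v := by
    rintro ⟨huv, rfl⟩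
    have hbit := Nat.testBit_log2 (Nat.xor_ne_zero_iff.mpr (f.valid huv))
    rw [Nat.testBit_xor] at hbit
    change (f u).testBit (f u ^^^ f v).log2 = _ ∧ (f v).testBit (f u ^^^ f v).log2 = _ ∨
      (f u).testBit (f u ^^^ f v).log2 = _ ∧ (f v).testBit (f u ^^^ f v).log2 = _
    grind

lemma IsGrundy.exists_fibreGraph_adj {f : G.Coloring ℕ} (hf : IsGrundy f) {v : V} {d : ℕ}
    (hd : d ≠ 0) (hv : (f v).testBit d.log2 = true) :
    ∃ u, (fibreGraph G (bitLevel f) d.log2).Adj v u ∧ f u = f v ^^^ d := by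
  obtain ⟨u, hadj, hu⟩ := hf (xor_lt_self_of_testBit_log2 hd hv)
  refine ⟨u, ⟨hadj, ?_⟩, hu⟩
  change (f v ^^^ f u).log2 = d.log2
  rw [hu, Nat.xor_xor_cancel_left]

lemma IsGrundy.nontrivial_neighborSet_fibreGraph {f : G.Coloring ℕ} (hf : IsGrundy f) {v : V}
    {i : ℕ} (hi : i ≠ 0) (hv : (f v).testBit i = true) :
    ((fibreGraph G (bitLevel f) i).neighborSet v).Nontrivial := by
  have hlog : (2 ^ i + 1).log2 = i :=
    (Nat.log2_eq_iff (by simp)).mpr ⟨by simp, by have := Nat.one_lt_two_pow hi; lia⟩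
  obtain ⟨u, hadj, hu⟩ := hf.exists_fibreGraph_adj (d := 2 ^ i) (by simp) (by simpa using hv)
  obtain ⟨w, hadj', hw⟩ := hf.exists_fibreGraph_adj (d := 2 ^ i + 1) (by simp) (by rwa [hlog])
  rw [Nat.log2_two_pow] at hadj
  rw [hlog] at hadj'
  refine ⟨u, hadj, w, hadj', fun huw ↦ ?_⟩
  have := Nat.xor_right_injective (hu.symm.trans (huw ▸ hw))
  lia

end BinaryLevel

section StarPacking

lemma exists_pairwiseDisjoint_inter_nonempty {ι X : Type*} (s : Set ι) (f : ι → Set X)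
    (hf : ∀ i ∈ s, (f i).Nonempty) :
    ∃ t ⊆ s, t.PairwiseDisjoint f ∧ ∀ i ∈ s, ∃ j ∈ t, (f i ∩ f j).Nonempty := by
  -- With constant radii, Vitali's covering lemma yields a maximal disjoint subfamily.
  obtain ⟨t, hts, hdisj, hmeet⟩ := Vitali.exists_disjoint_subfamily_covering_enlargement f s
    (fun _ ↦ 0) 2 one_lt_two (fun _ _ ↦ le_rfl) 0 (fun _ _ ↦ le_rfl) hf
  exact ⟨t, hts, hdisj, fun i hi ↦ (hmeet i hi).imp fun _ h ↦ ⟨h.1, h.2.1⟩⟩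

variable {V : Type*} {H : SimpleGraph V} {A B : Set V}

/-- A packing of stars centred in `A` that jointly cover every neighbour of a centre: a leaf `b`
belongs to the star of `hub b`. The labels are the intended colours of the star edges; in each star
the labels `0` and `1` occur exactly once. -/
structure StarPacking (H : SimpleGraph V) (A : Set V) where
  centres : Set V
  hub : V → V
  label : V → ℕ
  centres_subset : centres ⊆ A
  label_lt : ∀ b, label b < 3
  hub_mem : ∀ a ∈ centres, ∀ b, H.Adj a b → hub b ∈ centres
  hub_adj : ∀ a ∈ centres, ∀ b, H.Adj a b → H.Adj (hub b) b
  existsUnique_label : ∀ a ∈ centres, ∀ i < 2, ∃! b, H.Adj a b ∧ hub b = a ∧ label b = i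
  eq_of_adj : ∀ a ∈ A \ centres, ∀ b b', H.Adj a b → H.Adj a b' →
    (∀ c ∈ centres, ¬H.Adj c b) → (∀ c ∈ centres, ¬H.Adj c b') → b = b'

/-- The centre followed by the two leaves of a path with two edges whose centre lies in `A`. -/
def IsCherry (H : SimpleGraph V) (A : Set V) (t : V × V × V) : Prop :=
  t.1 ∈ A ∧ H.Adj t.1 t.2.1 ∧ H.Adj t.1 t.2.2 ∧ t.2.1 ≠ t.2.2

/-- The vertices of a cherry given as a triple. -/
def cherryVerts (t : V × V × V) : Set V := {t.1, t.2.1, t.2.2}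

/-- A set of pairwise disjoint cherries such that no further cherry is disjoint from all of them. -/
structure IsMaximalCherryPacking (H : SimpleGraph V) (A : Set V) (T : Set (V × V × V)) : Prop where
  isCherry : ∀ t ∈ T, IsCherry H A t
  pairwiseDisjoint : T.PairwiseDisjoint cherryVerts
  meets : ∀ t, IsCherry H A t → ∃ t' ∈ T, (cherryVerts t ∩ cherryVerts t').Nonempty

lemma exists_isMaximalCherryPacking (H : SimpleGraph V) (A : Set V) :
    ∃ T, IsMaximalCherryPacking H A T := by
  obtain ⟨T, hT, hdisj, hmeet⟩ := exists_pairwiseDisjoint_inter_nonempty {t | IsCherry H A t}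
    cherryVerts fun t _ ↦ ⟨t.1, Or.inl rfl⟩
  exact ⟨T, hT, hdisj, hmeet⟩

namespace IsMaximalCherryPacking

variable {T : Set (V × V × V)} (hT : IsMaximalCherryPacking H A T)

include hT

lemma exists_hub (b : V) : ∃ a, (∀ t ∈ T, b = t.2.1 ∨ b = t.2.2 → a = t.1) ∧
    ∀ a' ∈ Prod.fst '' T, H.Adj a' b → a ∈ Prod.fst '' T ∧ H.Adj a b := by
  by_cases hb : ∃ t ∈ T, b = t.2.1 ∨ b = t.2.2
  · obtain ⟨t, ht, htb⟩ := hb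
    refine ⟨t.1, fun t' ht' htb' ↦ ?_, fun _ _ _ ↦ ⟨⟨t, ht, rfl⟩, ?_⟩⟩
    · rw [hT.pairwiseDisjoint.elim_set ht ht' b (Or.inr htb) (Or.inr htb')]
    · rcases htb with rfl | rfl
      exacts [(hT.isCherry t ht).2.1, (hT.isCherry t ht).2.2.1]
  · by_cases hadj : ∃ a ∈ Prod.fst '' T, H.Adj a b
    · obtain ⟨a, ha, hab⟩ := hadj
      exact ⟨a, fun t ht htb ↦ absurd ⟨t, ht, htb⟩ hb, fun _ _ _ ↦ ⟨ha, hab⟩⟩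
    · exact ⟨b, fun t ht htb ↦ absurd ⟨t, ht, htb⟩ hb, fun a ha hab ↦ absurd ⟨a, ha, hab⟩ hadj⟩

lemma exists_label (b : V) :
    ∃ i < 3, (i = 1 ↔ ∃ t ∈ T, t.2.1 = b) ∧ (i = 0 ↔ ∃ t ∈ T, t.2.2 = b) := by
  by_cases hfst : ∃ t ∈ T, t.2.1 = b
  · have hsnd : ¬∃ t ∈ T, t.2.2 = b := by
      rintro ⟨t', ht', rfl⟩
      obtain ⟨t, ht, htb⟩ := hfst
      obtain rfl := hT.pairwiseDisjoint.elim_set ht ht' t.2.1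
        (Or.inr (Or.inl rfl)) (Or.inr (Or.inr htb))
      exact (hT.isCherry t ht).2.2.2 htb
    exact ⟨1, by simp [hfst, hsnd]⟩
  · by_cases hsnd : ∃ t ∈ T, t.2.2 = b
    · exact ⟨0, by simp [hfst, hsnd]⟩
    · exact ⟨2, by simp [hfst, hsnd]⟩

lemma eq_of_adj (hH : H.IsBipartiteWith A B) {a b b' : V} (ha : a ∈ A \ Prod.fst '' T)
    (hab : H.Adj a b) (hab' : H.Adj a b') (hb : ∀ c ∈ Prod.fst '' T, ¬H.Adj c b)
    (hb' : ∀ c ∈ Prod.fst '' T, ¬H.Adj c b') : b = b' := by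
  by_contra hne
  obtain ⟨t, ht, v, hv, hvt⟩ := hT.meets (a, b, b') ⟨ha.1, hab, hab', hne⟩
  obtain ⟨hmem, hadj, hadj', -⟩ := hT.isCherry t ht
  have htC : t.1 ∈ Prod.fst '' T := ⟨t, ht, rfl⟩
  have hcentre : v ∈ A → v ∈ Prod.fst '' T := fun hvA ↦ by
    have hvB : v ∉ B := hH.disjoint.notMem_of_mem_left hvA
    rcases hvt with rfl | rfl | rfl
    · exact htC
    · exact absurd (hH.mem_of_mem_adj hmem hadj) hvB
    · exact absurd (hH.mem_of_mem_adj hmem hadj') hvB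
  have hleaf : v ∈ B → H.Adj t.1 v := fun hvB ↦ by
    rcases hvt with rfl | rfl | rfl
    · exact absurd hvB (hH.disjoint.notMem_of_mem_left hmem)
    · exact hadj
    · exact hadj'
  rcases hv with rfl | rfl | rfl
  · exact ha.2 (hcentre ha.1)
  · exact hb t.1 htC (hleaf (hH.mem_of_mem_adj ha.1 hab))
  · exact hb' t.1 htC (hleaf (hH.mem_of_mem_adj ha.1 hab'))

end IsMaximalCherryPacking

lemma nonempty_starPacking (hH : H.IsBipartiteWith A B) : Nonempty (StarPacking H A) := by
  obtain ⟨T, hT⟩ := exists_isMaximalCherryPacking H A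
  choose hub hhub hhub_mem using hT.exists_hub
  choose label hlabel_lt hlabel_one hlabel_zero using hT.exists_label
  refine ⟨⟨Prod.fst '' T, hub, label, ?_, hlabel_lt, fun a ha b hab ↦ (hhub_mem b a ha hab).1,
    fun a ha b hab ↦ (hhub_mem b a ha hab).2, ?_, fun a ha b b' ↦ hT.eq_of_adj hH ha⟩⟩
  · rintro _ ⟨t, ht, rfl⟩
    exact (hT.isCherry t ht).1
  · rintro _ ⟨t, ht, rfl⟩ i hi
    have heq {t' : V × V × V} (ht' : t' ∈ T) (h : t'.1 = t.1) : t' = t :=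
      hT.pairwiseDisjoint.elim_set ht' ht t'.1 (Or.inl rfl) (Or.inl h)
    obtain ⟨-, hadj, hadj', -⟩ := hT.isCherry t ht
    interval_cases i
    · refine ⟨t.2.2, ⟨hadj', hhub _ t ht (Or.inr rfl), (hlabel_zero _).mpr ⟨t, ht, rfl⟩⟩, ?_⟩
      rintro b ⟨-, hb, hb0⟩
      obtain ⟨t', ht', rfl⟩ := (hlabel_zero b).mp hb0
      rw [heq ht' ((hhub _ t' ht' (Or.inr rfl)).symm.trans hb)]
    · refine ⟨t.2.1, ⟨hadj, hhub _ t ht (Or.inl rfl), (hlabel_one _).mpr ⟨t, ht, rfl⟩⟩, ?_⟩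
      rintro b ⟨-, hb, hb1⟩
      obtain ⟨t', ht', rfl⟩ := (hlabel_one b).mp hb1
      rw [heq ht' ((hhub _ t' ht' (Or.inl rfl)).symm.trans hb)]

end StarPacking

namespace StarPacking

variable {V : Type*} {H : SimpleGraph V} {A B : Set V} (S : StarPacking H A)

/-- The vertices covered by the stars. -/
def leaves : Set V := {b | ∃ a ∈ S.centres, H.Adj a b}

/-- A path `s n w` from `s` to a covered vertex `w` of label `0` or `2`. An uncovered vertex `s`
with a gate is treated by colouring the two edges of the path. -/
def IsGate (s n w : V) : Prop :=
  H.Adj n s ∧ H.Adj n w ∧ w ∈ S.leaves ∧ S.label w ≠ 1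

/-- The vertices of `B` left uncovered by the stars and having a gate. -/
def gated (B : Set V) : Set V := {s ∈ B \ S.leaves | ∃ n w, S.IsGate s n w}

/-- The vertices of `B` left uncovered by the stars and having no gate but at least two
neighbours. -/
def branching (B : Set V) : Set V :=
  {s ∈ B \ S.leaves | (∀ n w, ¬S.IsGate s n w) ∧ (H.neighborSet s).Nontrivial}

/-- The remaining uncovered vertices of `B`; they have at most one neighbour. -/
def pendant (B : Set V) : Set V :=
  {s ∈ B \ S.leaves | (∀ n w, ¬S.IsGate s n w) ∧ (H.neighborSet s).Subsingleton}

/-- A choice of the edges to be coloured around the uncovered vertices: a gate for every gated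
vertex and two neighbours for every branching vertex. -/
structure Routing (B : Set V) where
  gate : V → V
  target : V → V
  left : V → V
  right : V → V
  isGate : ∀ s ∈ S.gated B, S.IsGate s (gate s) (target s)
  left_adj : ∀ s ∈ S.branching B, H.Adj (left s) s
  right_adj : ∀ s ∈ S.branching B, H.Adj (right s) s
  left_ne_right : ∀ s ∈ S.branching B, left s ≠ right s

lemma nonempty_routing (B : Set V) : Nonempty (S.Routing B) := by
  have hgate : ∀ s ∈ S.gated B, ∃ n w, S.IsGate s n w := fun s hs ↦ hs.2
  have hbranch : ∀ s ∈ S.branching B, ∃ p q, H.Adj p s ∧ H.Adj q s ∧ p ≠ q := by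
    rintro s ⟨-, -, p, hp, q, hq, hne⟩
    exact ⟨p, q, hp.symm, hq.symm, hne⟩
  choose! n w hnw using hgate
  choose! p q hp hq hne using hbranch
  exact ⟨⟨n, w, p, q, hnw, hp, hq, hne⟩⟩

variable {S}

lemma label_eq_one_of_adj {s a b : V} (hs : ∀ n w, ¬S.IsGate s n w) (has : H.Adj a s)
    (hab : H.Adj a b) (hb : b ∈ S.leaves) : S.label b = 1 := by
  by_contra h
  exact hs a b ⟨has, hab, hb, h⟩

lemma notMem_centres_of_adj {a s : V} (hs : s ∉ S.leaves) (has : H.Adj a s) : a ∉ S.centres :=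
  fun ha ↦ hs ⟨a, ha, has⟩

lemma hub_mem_of_mem_leaves {b : V} (hb : b ∈ S.leaves) : S.hub b ∈ S.centres :=
  let ⟨a, ha, hab⟩ := hb
  S.hub_mem a ha b hab

lemma hub_adj_of_mem_leaves {b : V} (hb : b ∈ S.leaves) : H.Adj (S.hub b) b :=
  let ⟨a, ha, hab⟩ := hb
  S.hub_adj a ha b hab

lemma eq_of_adj_of_notMem_leaves (hH : H.IsBipartiteWith A B) {a s s' : V} (hs : s ∈ B \ S.leaves)
    (hs' : s' ∈ B \ S.leaves) (has : H.Adj a s) (has' : H.Adj a s') : s = s' :=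
  S.eq_of_adj a ⟨hH.mem_of_mem_adj' hs.1 has, notMem_centres_of_adj hs.2 has⟩ s s' has has'
    (fun c hc hcs ↦ hs.2 ⟨c, hc, hcs⟩) (fun c hc hcs ↦ hs'.2 ⟨c, hc, hcs⟩)

namespace Routing

variable (R : S.Routing B)

/-- `R.Colours a b i` says that the edge from `a ∈ A` to `b ∈ B` receives colour `i`. Since
`2 - i` swaps `0` and `2`, a leaf labelled `0` or `2` only ever sees these two colours, and a leaf
labelled `1` only sees `1`. -/
inductive Colours : V → V → ℕ → Prop
  | star {b : V} (hb : b ∈ S.leaves) : Colours (S.hub b) b (S.label b)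
  | gate {s : V} (hs : s ∈ S.gated B) : Colours (R.gate s) s 1
  | target {s : V} (hs : s ∈ S.gated B) : Colours (R.gate s) (R.target s) (2 - S.label (R.target s))
  | left {s : V} (hs : s ∈ S.branching B) : Colours (R.left s) s 2
  | right {s : V} (hs : s ∈ S.branching B) : Colours (R.right s) s 0

variable {R} {a b s : V} {i j : ℕ}

lemma Colours.adj (h : R.Colours a b i) : H.Adj a b := by
  cases h with
  | star hb => exact hub_adj_of_mem_leaves hb
  | gate hs => exact (R.isGate _ hs).1
  | target hs => exact (R.isGate _ hs).2.1
  | left hs => exact R.left_adj _ hs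
  | right hs => exact R.right_adj _ hs

lemma Colours.lt_three (h : R.Colours a b i) : i < 3 := by
  cases h with
  | star hb => exact S.label_lt _
  | _ => lia

lemma gate_notMem_centres (hs : s ∈ S.gated B) : R.gate s ∉ S.centres :=
  notMem_centres_of_adj hs.1.2 (R.isGate s hs).1

lemma Colours.of_mem_centres (h : R.Colours a b i) (ha : a ∈ S.centres) :
    S.hub b = a ∧ S.label b = i := by
  cases h with
  | star hb => exact ⟨rfl, rfl⟩
  | gate hs => exact absurd ha (gate_notMem_centres hs)
  | target hs => exact absurd ha (gate_notMem_centres hs)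
  | left hs => exact absurd ha (notMem_centres_of_adj hs.1.2 (R.left_adj _ hs))
  | right hs => exact absurd ha (notMem_centres_of_adj hs.1.2 (R.right_adj _ hs))

lemma Colours.of_mem_leaves (h : R.Colours a b i) (hb : b ∈ S.leaves) :
    (a = S.hub b ∧ i = S.label b) ∨ (a ∉ S.centres ∧ S.label b ≠ 1 ∧ i = 2 - S.label b) := by
  cases h with
  | star hb => exact Or.inl ⟨rfl, rfl⟩
  | gate hs => exact absurd hb hs.1.2
  | target hs => exact Or.inr ⟨gate_notMem_centres hs, (R.isGate _ hs).2.2.2, rfl⟩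
  | left hs => exact absurd hb hs.1.2
  | right hs => exact absurd hb hs.1.2

lemma Colours.of_notMem_leaves (h : R.Colours a s i) (hs : s ∉ S.leaves) :
    (s ∈ S.gated B ∧ a = R.gate s ∧ i = 1) ∨
      (s ∈ S.branching B ∧ (a = R.left s ∧ i = 2 ∨ a = R.right s ∧ i = 0)) := by
  cases h with
  | star hb => exact absurd hb hs
  | gate hs => exact Or.inl ⟨hs, rfl, rfl⟩
  | target hs' => exact absurd (R.isGate _ hs').2.2.1 hs
  | left hs => exact Or.inr ⟨hs, Or.inl ⟨rfl, rfl⟩⟩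
  | right hs => exact Or.inr ⟨hs, Or.inr ⟨rfl, rfl⟩⟩

lemma notMem_branching_of_mem_gated (hs : s ∈ S.gated B) : s ∉ S.branching B :=
  fun h ↦ let ⟨n, w, hnw⟩ := hs.2; h.2.1 n w hnw

lemma Colours.of_mem_gated (h : R.Colours a s i) (hs : s ∈ S.gated B) : a = R.gate s ∧ i = 1 := by
  rcases h.of_notMem_leaves hs.1.2 with h | h
  · exact h.2
  · exact absurd h.1 (notMem_branching_of_mem_gated hs)

lemma Colours.of_mem_branching (h : R.Colours a s i) (hs : s ∈ S.branching B) :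
    a = R.left s ∧ i = 2 ∨ a = R.right s ∧ i = 0 := by
  rcases h.of_notMem_leaves hs.1.2 with h | h
  · exact absurd hs (notMem_branching_of_mem_gated h.1)
  · exact h.2

lemma Colours.notMem_pendant (h : R.Colours a s i) : s ∉ S.pendant B := by
  intro hs
  rcases h.of_notMem_leaves hs.1.2 with h | h
  · obtain ⟨n, w, hnw⟩ := h.1.2
    exact hs.2.1 n w hnw
  · exact Set.not_subsingleton_iff.mpr h.1.2.2 hs.2.2

lemma Colours.unique (hi : R.Colours a b i) (hj : R.Colours a b j) : i = j := by
  by_cases hb : b ∈ S.leaves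
  · have := hub_mem_of_mem_leaves hb
    have := hi.of_mem_leaves hb
    have := hj.of_mem_leaves hb
    grind
  · have := hi.of_notMem_leaves hb
    have := hj.of_notMem_leaves hb
    grind [notMem_branching_of_mem_gated, R.left_ne_right]

lemma Colours.of_adj_notMem_leaves (hH : H.IsBipartiteWith A B) (h : R.Colours a b i)
    (hs : s ∈ B \ S.leaves) (has : H.Adj a s) :
    (s ∈ S.gated B ∧ a = R.gate s ∧ (b = s ∧ i = 1 ∨ b = R.target s ∧ i = 2 - S.label b)) ∨
      (s ∈ S.branching B ∧ b = s ∧ i ≠ 1) := by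
  cases h with
  | star hb => exact absurd (hub_mem_of_mem_leaves hb) (notMem_centres_of_adj hs.2 has)
  | gate hs' =>
    obtain rfl := eq_of_adj_of_notMem_leaves hH hs hs'.1 has (R.isGate _ hs').1
    exact Or.inl ⟨hs', rfl, Or.inl ⟨rfl, rfl⟩⟩
  | target hs' =>
    obtain rfl := eq_of_adj_of_notMem_leaves hH hs hs'.1 has (R.isGate _ hs').1
    exact Or.inl ⟨hs', rfl, Or.inr ⟨rfl, rfl⟩⟩
  | left hs' =>
    obtain rfl := eq_of_adj_of_notMem_leaves hH hs hs'.1 has (R.left_adj _ hs')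
    exact Or.inr ⟨hs', rfl, by lia⟩
  | right hs' =>
    obtain rfl := eq_of_adj_of_notMem_leaves hH hs hs'.1 has (R.right_adj _ hs')
    exact Or.inr ⟨hs', rfl, by lia⟩

lemma colours_iff_of_mem_centres (ha : a ∈ S.centres) :
    R.Colours a b i ↔ H.Adj a b ∧ S.hub b = a ∧ S.label b = i := by
  refine ⟨fun h ↦ ⟨h.adj, h.of_mem_centres ha⟩, ?_⟩
  rintro ⟨hab, rfl, rfl⟩
  exact Colours.star ⟨_, ha, hab⟩

lemma Colours.eq_one_iff_of_mem_leaves (h : R.Colours a b i) (hb : b ∈ S.leaves) :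
    i = 1 ↔ S.label b = 1 := by
  have := h.of_mem_leaves hb
  have := S.label_lt b
  lia

lemma existsUnique_colours_label (hb : b ∈ S.leaves) : ∃! a, R.Colours a b (S.label b) := by
  refine ⟨S.hub b, Colours.star hb, fun a ha ↦ ?_⟩
  have := ha.of_mem_leaves hb
  have := S.label_lt b
  grind

lemma two_sub_label_target_ne_one (hs : s ∈ S.gated B) : 2 - S.label (R.target s) ≠ 1 := by
  have := (R.isGate s hs).2.2.2
  have := S.label_lt (R.target s)
  lia

lemma existsUnique_colours_gate_one (hH : H.IsBipartiteWith A B) (hs : s ∈ S.gated B) :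
    ∃! b, R.Colours (R.gate s) b 1 := by
  refine ⟨s, Colours.gate hs, fun b hb ↦ ?_⟩
  have := hb.of_adj_notMem_leaves hH hs.1 (R.isGate s hs).1
  grind [two_sub_label_target_ne_one hs]

lemma existsUnique_colours_gate_target (hH : H.IsBipartiteWith A B) (hs : s ∈ S.gated B) :
    ∃! b, R.Colours (R.gate s) b (2 - S.label (R.target s)) := by
  refine ⟨R.target s, Colours.target hs, fun b hb ↦ ?_⟩
  have := hb.of_adj_notMem_leaves hH hs.1 (R.isGate s hs).1
  grind [two_sub_label_target_ne_one hs, notMem_branching_of_mem_gated hs]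

lemma isDistinguished_of_mem_centres (ha : a ∈ S.centres) (hab : H.Adj a b) :
    IsDistinguished R.Colours a b := by
  have hb : b ∈ S.leaves := ⟨a, ha, hab⟩
  have hunique {i : ℕ} (hi : i < 2) : ∃! b', R.Colours a b' i := by
    simpa only [colours_iff_of_mem_centres ha] using S.existsUnique_label a ha i hi
  by_cases hlabel : S.label b = 1
  · exact ⟨0, Or.inl ⟨hunique (by lia), fun a' h ↦ by
      simpa [hlabel] using h.eq_one_iff_of_mem_leaves hb⟩⟩
  · exact ⟨1, Or.inl ⟨hunique (by lia), fun a' h ↦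
      hlabel ((h.eq_one_iff_of_mem_leaves hb).mp rfl)⟩⟩

lemma isDistinguished_gate (hH : H.IsBipartiteWith A B) (hs : s ∈ S.gated B) (hb : b ∈ S.leaves) :
    IsDistinguished R.Colours (R.gate s) b := by
  by_cases hlabel : S.label b = 1
  · exact ⟨_, Or.inl ⟨existsUnique_colours_gate_target hH hs, fun a h ↦
      two_sub_label_target_ne_one hs ((h.eq_one_iff_of_mem_leaves hb).mpr hlabel)⟩⟩
  · exact ⟨1, Or.inl ⟨existsUnique_colours_gate_one hH hs, fun a h ↦
      hlabel ((h.eq_one_iff_of_mem_leaves hb).mp rfl)⟩⟩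

lemma Colours.exists_adj_notMem_leaves (h : R.Colours a b i) (ha : a ∉ S.centres) :
    ∃ s ∈ B \ S.leaves, H.Adj a s := by
  cases h with
  | star hb => exact absurd (hub_mem_of_mem_leaves hb) ha
  | gate hs => exact ⟨_, hs.1, (R.isGate _ hs).1⟩
  | target hs => exact ⟨_, hs.1, (R.isGate _ hs).1⟩
  | left hs => exact ⟨_, hs.1, R.left_adj _ hs⟩
  | right hs => exact ⟨_, hs.1, R.right_adj _ hs⟩

lemma isDistinguished_of_mem_leaves (hH : H.IsBipartiteWith A B) (ha : a ∉ S.centres)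
    (hab : H.Adj a b) (hb : b ∈ S.leaves) : IsDistinguished R.Colours a b := by
  by_cases hcol : ∃ b', R.Colours a b' (S.label b)
  · obtain ⟨b', hb'⟩ := hcol
    obtain ⟨s, hs, has⟩ := hb'.exists_adj_notMem_leaves ha
    rcases hb'.of_adj_notMem_leaves hH hs has with ⟨hgated, rfl, -⟩ | ⟨hbranch, -, hne⟩
    · exact isDistinguished_gate hH hgated hb
    · exact absurd (label_eq_one_of_adj hbranch.2.1 has hab hb) hne
  · exact ⟨_, Or.inr ⟨existsUnique_colours_label hb, not_exists.mp hcol⟩⟩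

lemma isDistinguished_of_mem_gated (hH : H.IsBipartiteWith A B) (has : H.Adj a s)
    (hs : s ∈ S.gated B) : IsDistinguished R.Colours a s := by
  by_cases ha : a = R.gate s
  · subst ha
    exact ⟨_, Or.inl ⟨existsUnique_colours_gate_target hH hs, fun a' h ↦
      two_sub_label_target_ne_one hs (h.of_mem_gated hs).2⟩⟩
  · refine ⟨1, Or.inr ⟨⟨R.gate s, Colours.gate hs, fun a' h ↦ (h.of_mem_gated hs).1⟩, fun b h ↦ ?_⟩⟩
    rcases h.of_adj_notMem_leaves hH hs.1 has with h | h
    · exact ha h.2.1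
    · exact notMem_branching_of_mem_gated hs h.1

lemma isDistinguished_of_mem_branching (hH : H.IsBipartiteWith A B) (has : H.Adj a s)
    (hs : s ∈ S.branching B) : IsDistinguished R.Colours a s := by
  have hne : R.left s ≠ R.right s := R.left_ne_right s hs
  have habsent {i : ℕ} (h : ¬R.Colours a s i) (b : V) : ¬R.Colours a b i := fun hb ↦ by
    rcases hb.of_adj_notMem_leaves hH hs.1 has with h' | ⟨-, rfl, -⟩
    · exact notMem_branching_of_mem_gated h'.1 hs
    · exact h hb
  by_cases ha : a = R.left s
  · refine ⟨0, Or.inr ⟨⟨R.right s, Colours.right hs, fun a' h ↦ ?_⟩, habsent fun h ↦ ?_⟩⟩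
    · simpa using h.of_mem_branching hs
    · exact hne (by simpa [ha] using h.of_mem_branching hs)
  · refine ⟨2, Or.inr ⟨⟨R.left s, Colours.left hs, fun a' h ↦ ?_⟩, habsent fun h ↦ ?_⟩⟩
    · simpa using h.of_mem_branching hs
    · exact ha (by simpa using h.of_mem_branching hs)

lemma isDistinguished_of_notMem_pendant (hH : H.IsBipartiteWith A B) (hab : H.Adj a b) (hbB : b ∈ B)
    (hb : b ∉ S.pendant B) : IsDistinguished R.Colours a b := by
  by_cases ha : a ∈ S.centres
  · exact isDistinguished_of_mem_centres ha hab
  by_cases hbL : b ∈ S.leaves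
  · exact isDistinguished_of_mem_leaves hH ha hab hbL
  by_cases hgate : ∃ n w, S.IsGate b n w
  · exact isDistinguished_of_mem_gated hH hab ⟨⟨hbB, hbL⟩, hgate⟩
  · push Not at hgate
    refine isDistinguished_of_mem_branching hH hab ⟨⟨hbB, hbL⟩, hgate, ?_⟩
    exact Set.not_subsingleton_iff.mp fun h ↦ hb ⟨⟨hbB, hbL⟩, hgate, h⟩

lemma Colours.mem_left (hH : H.IsBipartiteWith A B) (h : R.Colours a b i) : a ∈ A := by
  cases h with
  | star hb => exact S.centres_subset (hub_mem_of_mem_leaves hb)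
  | gate hs => exact hH.mem_of_mem_adj' hs.1.1 (R.isGate _ hs).1
  | target hs => exact hH.mem_of_mem_adj' hs.1.1 (R.isGate _ hs).1
  | left hs => exact hH.mem_of_mem_adj' hs.1.1 (R.left_adj _ hs)
  | right hs => exact hH.mem_of_mem_adj' hs.1.1 (R.right_adj _ hs)

end Routing

/-- The edges at the pendant vertices, which are the exceptional edges of the bipartite case. -/
def pendantEdges (S : StarPacking H A) (B : Set V) : Set (Sym2 V) :=
  {e ∈ H.edgeSet | ∃ s ∈ e, s ∈ S.pendant B}

lemma eq_of_mem_pendantEdges (hH : H.IsBipartiteWith A B) {e f : Sym2 V} {v : V}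
    (he : e ∈ S.pendantEdges B) (hf : f ∈ S.pendantEdges B) (hve : v ∈ e) (hvf : v ∈ f) :
    e = f := by
  obtain ⟨he, s, ⟨a, rfl⟩, hs⟩ := he
  obtain ⟨hf, s', ⟨a', rfl⟩, hs'⟩ := hf
  rw [mem_edgeSet] at he hf
  have hnotMem {x y : V} (hy : y ∈ B) (hyx : H.Adj y x) : x ∉ B :=
    hH.disjoint.notMem_of_mem_left (hH.mem_of_mem_adj' hy hyx.symm)
  rcases Sym2.mem_iff.mp hve with rfl | rfl <;> rcases Sym2.mem_iff.mp hvf with rfl | rfl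
  · rw [hs.2.2 he hf]
  · exact absurd hs.1.1 (hnotMem hs'.1.1 hf)
  · exact absurd hs'.1.1 (hnotMem hs.1.1 he)
  · rw [eq_of_adj_of_notMem_leaves hH hs.1 hs'.1 he.symm hf.symm]

lemma satisfiedP_of_notMem_pendantEdges (hH : H.IsBipartiteWith A B) (R : S.Routing B)
    {c : Sym2 V → Option ℕ} (hc : ∀ a ∈ A, ∀ b i, c s(a, b) = some i ↔ R.Colours a b i)
    {e : Sym2 V} (he : e ∈ H.edgeSet) (hpendant : e ∉ S.pendantEdges B) : SatisfiedP H c e := by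
  have horient {a b : V} (hab : H.Adj a b) (ha : a ∈ A) (hb : b ∈ B)
      (h : s(a, b) ∉ S.pendantEdges B) : SatisfiedP H c s(a, b) :=
    (Routing.isDistinguished_of_notMem_pendant hH hab hb fun hp ↦
      h ⟨hab, b, Sym2.mem_mk_right a b, hp⟩).satisfiedP hH (fun _ _ _ ↦ Routing.Colours.adj)
      hc ha hb
  induction e with
  | _ u v =>
    rcases hH.mem_of_adj he with ⟨hu, hv⟩ | ⟨hu, hv⟩
    · exact horient he hu hv hpendant
    · rw [Sym2.eq_swap] at hpendant ⊢
      exact horient (H.mem_edgeSet.mp he).symm hv hu hpendant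

lemma isExceptionalMatching_pendantEdges (hH : H.IsBipartiteWith A B) (R : S.Routing B)
    {c : Sym2 V → Option ℕ} (hc : ∀ a ∈ A, ∀ b i, c s(a, b) = some i ↔ R.Colours a b i) :
    IsExceptionalMatching H c (S.pendantEdges B) where
  subset _ he := he.1
  disjoint e he f hf hne v hv := hne (eq_of_mem_pendantEdges hH he hf hv.1 hv.2)
  uncoloured := by
    rintro e ⟨he, s, ⟨a, rfl⟩, hs⟩
    refine Option.eq_none_iff_forall_ne_some.mpr fun i hi ↦ ?_
    rw [Sym2.eq_swap, hc a (hH.mem_of_mem_adj' hs.1.1 (H.mem_edgeSet.mp he).symm)] at hi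
    exact hi.notMem_pendant hs
  satisfied _ he := satisfiedP_of_notMem_pendantEdges hH R hc he

end StarPacking

open StarPacking Routing in
theorem exists_isExceptionalMatching_of_isBipartiteWith {V : Type*} {H : SimpleGraph V}
    {A B : Set V} (hH : H.IsBipartiteWith A B) :
    ∃ c M, PartialColouring H c 3 ∧ IsExceptionalMatching H c M ∧
      ∀ e ∈ M, ∃ b ∈ e, b ∈ B ∧ (H.neighborSet b).Subsingleton := by
  obtain ⟨S⟩ := nonempty_starPacking hH
  obtain ⟨R⟩ := S.nonempty_routing B
  obtain ⟨c, hc, hcR⟩ := exists_partialColouring_of_relation hH (K := R.Colours) (k := 3)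
    (fun _ _ _ ↦ Colours.mem_left hH)
    (fun _ _ _ ↦ Colours.adj) (fun _ _ _ ↦ Colours.lt_three)
    (fun _ _ _ _ ↦ Colours.unique)
  exact ⟨c, _, hc, isExceptionalMatching_pendantEdges hH R hcR,
    fun e ⟨_, b, hbe, hb⟩ ↦ ⟨b, hbe, hb.1.1, hb.2.2⟩⟩

theorem stmt7 {V : Type*} (G : SimpleGraph V) (α : ℕ) (hα : 1 ≤ α)
    (hchrom : G.Colorable α) :
    ∃ c : Sym2 V → Option ℕ, PartialColouring G c (3 * Nat.clog 2 α) ∧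
      ∃ M : Set (Sym2 V), M ⊆ G.edgeSet ∧
        (∀ e ∈ M, ∀ f ∈ M, e ≠ f → ∀ v : V, ¬(v ∈ e ∧ v ∈ f)) ∧
        (∀ e ∈ M, c e = none) ∧
        ∀ e ∈ G.edgeSet, e ∉ M → SatisfiedP G c e := by
  obtain ⟨C, hC⟩ := (colorable_iff_exists_bdd_nat_coloring α).mp hchrom
  obtain ⟨f, hgrundy, hfC⟩ := exists_isGrundy_le C
  have hf (v : V) : f v < 2 ^ Nat.clog 2 α :=
    ((hfC v).trans_lt (hC v)).trans_le (Nat.le_pow_clog one_lt_two α)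
  choose c M hc hM hpendant using fun i ↦
    exists_isExceptionalMatching_of_isBipartiteWith (isBipartiteWith_fibreGraph_bitLevel f i)
  have hempty (i : ℕ) (hi : i ≠ 0) : M i = ∅ := by
    refine Set.eq_empty_iff_forall_notMem.mpr fun e he ↦ ?_
    obtain ⟨b, -, hb, hsub⟩ := hpendant i e he
    exact Set.not_subsingleton_iff.mpr (hgrundy.nontrivial_neighborSet_fibreGraph hi hb) hsub
  have hM₀ := isExceptionalMatching_glueColouring hc hM hempty
  exact ⟨glueColouring 3 (bitLevel f) c, partialColouring_glueColouring hc fun e ↦ bitLevel_lt f hf,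
    M 0, hM₀.subset, hM₀.disjoint, hM₀.uncoloured, hM₀.satisfied⟩
end

section
/- Every graph G with chromatic number at most α (α ≥ 1) admits a partial edge colouring with at most 3⌈log₂ α⌉ + 16 colours satisfying all non-isolated edges of G. -/
open SimpleGraph

/-!
Colour the edge from each non-root vertex of a forest to its parent by a label of that vertex, with
disjoint palettes for edge-disjoint forests. In a breadth-first forest of a bipartite graph, the
label given by the level modulo three satisfies every edge `xy` whose end `x` of smaller level is
not a root: the edge from `x` to its parent is the only one of its colour near `xy`.

Let `I` be a maximal independent set containing a maximal independent set of the vertices of degree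
at least two, `K` a maximal independent set of the rest, and `J` what remains. For the edges leaving
`I`, root the forest in `I` at vertices of degree at least two; two further labels, on two children
of each root, take care of the edges at the roots. Recording in addition which vertices lie in `J`
satisfies the edges between `J` and `K`, for a total of `2 * 5` colours.

Colour `J` greedily and split its edges into `⌈log₂ α⌉` bipartite graphs according to the highest
binary digit in which the two colours differ. Each component of the `i`-th graph has a vertex of
some colour `d` such that `i` is the highest digit in which `d` and `d + 1` differ. Root the tree
there and hang the root on a neighbour in `K`, so that no edge of the graph is at the lowest level
and three labels suffice. The digit `i` can be read off from each edge of the forest, so different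
forests are edge-disjoint.
-/

section Neighbourhoods

variable {V : Type*} {G : SimpleGraph V}

theorem mk_mem_ECN_mk {a b x y : V} :
    s(a, b) ∈ ECN G s(x, y) ↔ G.Adj a b ∧ (a = x ∨ a = y ∨ b = x ∨ b = y) := by
  simp only [ECN, Set.mem_ofPred_eq, mem_edgeSet, Sym2.mem_iff, or_and_right, exists_or,
    exists_eq_left, or_assoc]

theorem nontrivial_neighborSet_of_EON_nonempty {x y : V} (hxy : G.Adj x y)
    (h : (EON G s(x, y)).Nonempty) :
    (G.neighborSet x).Nontrivial ∨ (G.neighborSet y).Nontrivial := by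
  obtain ⟨f, ⟨hf, w, hwf, hwe⟩, hne⟩ := h
  obtain ⟨b, rfl⟩ := Sym2.mem_iff_exists.1 hwf
  rcases Sym2.mem_iff.1 hwe with rfl | rfl
  · exact .inl ⟨b, hf, y, hxy, fun h => hne (by rw [h, Set.mem_singleton_iff])⟩
  · exact .inr ⟨b, hf, x, hxy.symm,
      fun h => hne (by rw [h, Sym2.eq_swap, Set.mem_singleton_iff])⟩

end Neighbourhoods

section Independence

variable {V : Type*} {G : SimpleGraph V}

theorem exists_dominating_isIndepSet {A W : Set V} (hA : G.IsIndepSet A) (hAW : A ⊆ W) :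
    ∃ I, A ⊆ I ∧ I ⊆ W ∧ G.IsIndepSet I ∧ ∀ u ∈ W, u ∉ I → ∃ v ∈ I, G.Adj u v := by
  obtain ⟨I, hAI, hI⟩ := zorn_subset_nonempty {S | S ⊆ W ∧ G.IsIndepSet S}
    (fun c hc hchain _ => ⟨⋃₀ c, ⟨Set.sUnion_subset fun S hS => (hc hS).1,
      (Set.pairwise_sUnion hchain.directedOn).2 fun S hS => (hc hS).2⟩,
      fun S => Set.subset_sUnion_of_mem⟩) A ⟨hAW, hA⟩
  refine ⟨I, hAI, hI.prop.1, hI.prop.2, fun u huW huI => ?_⟩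
  by_contra! hu
  have hins : G.IsIndepSet (insert u I) :=
    hI.prop.2.insert fun v hv _ => ⟨hu v hv, fun h => hu v hv h.symm⟩
  exact huI (hI.le_of_ge ⟨Set.insert_subset huW hI.prop.1, hins⟩ (Set.subset_insert u I)
    (Set.mem_insert u I))

/-- A colouring is greedy (a Grundy colouring) if every vertex sees every smaller colour in its
neighbourhood. -/
def IsGreedy (C : G.Coloring ℕ) : Prop :=
  ∀ u, ∀ d < C u, ∃ v, G.Adj u v ∧ C v = d

-- First-fit may use too many colours; instead colour class `0` of the given colouring is enlarged
-- to a maximal independent set, and the rest is treated recursively.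
theorem exists_isGreedy_coloring {n : ℕ} (hG : G.Colorable n) :
    ∃ C : G.Coloring ℕ, IsGreedy C ∧ ∀ u, C u < n := by
  classical
  induction n generalizing V with
  | zero =>
    have : IsEmpty V := colorable_zero_iff.1 hG
    exact ⟨.mk isEmptyElim fun {v} => isEmptyElim v, isEmptyElim, isEmptyElim⟩
  | succ n ih =>
    obtain ⟨c⟩ := hG
    obtain ⟨I, hcI, -, hI, hdom⟩ := exists_dominating_isIndepSet (G := G) (W := Set.univ)
      (A := {u | c u = 0}) (fun u hu v hv _ huv => c.valid huv (hu.trans hv.symm))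
      (Set.subset_univ _)
    have hne : ∀ u : ↥Iᶜ, c u ≠ 0 := fun u hu => u.2 (hcI hu)
    have hcol : (G.induce Iᶜ).Colorable n :=
      ⟨.mk (fun u => (c u).pred (hne u)) fun huv h => c.valid huv (Fin.pred_inj.1 h)⟩
    obtain ⟨D, hD, hDn⟩ := ih hcol
    let C : G.Coloring ℕ := .mk (fun u => if h : u ∈ I then 0 else D ⟨u, h⟩ + 1) <| by
      intro u v huv
      by_cases hu : u ∈ I <;> by_cases hv : v ∈ I
      · exact absurd huv (hI hu hv huv.ne)
      · simp [hu, hv]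
      · simp [hu, hv]
      · have := D.valid (v := ⟨u, hu⟩) (w := ⟨v, hv⟩) huv
        simpa [hu, hv]
    have hC_mem : ∀ u ∈ I, C u = 0 := fun u hu => dif_pos hu
    have hC_notMem : ∀ u (h : u ∉ I), C u = D ⟨u, h⟩ + 1 := fun u h => dif_neg h
    refine ⟨C, fun u d hd => ?_, fun u => ?_⟩
    · have hu : u ∉ I := fun hu => by simp [hC_mem u hu] at hd
      cases d with
      | zero =>
        obtain ⟨v, hv, huv⟩ := hdom u trivial hu
        exact ⟨v, huv, hC_mem v hv⟩
      | succ d =>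
        rw [hC_notMem u hu, Nat.succ_lt_succ_iff] at hd
        obtain ⟨⟨v, hv⟩, huv, rfl⟩ := hD ⟨u, hu⟩ d hd
        exact ⟨v, huv, hC_notMem v hv⟩
    · by_cases hu : u ∈ I
      · simp [hC_mem u hu]
      · simpa [hC_notMem u hu] using hDn ⟨u, hu⟩

end Independence

section LevelledForest

variable {V : Type*} {G H : SimpleGraph V}

/-- A rooted spanning forest of `G`, given by a parent map along which the level drops by one.
Roots have level `0`, and the value of `parent` at a root is irrelevant. -/
structure LevelledForest (G : SimpleGraph V) where
  level : V → ℕ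
  parent : V → V
  adj_parent : ∀ u, 0 < level u → G.Adj u (parent u)
  level_eq : ∀ u, 0 < level u → level u = level (parent u) + 1

namespace LevelledForest

/-- The edge from a non-root vertex to its parent (junk at roots). -/
def edge (F : LevelledForest G) (u : V) : Sym2 V := s(u, F.parent u)

/-- The set of edges joining a vertex to its parent. -/
def edges (F : LevelledForest G) : Set (Sym2 V) := F.edge '' {u | 0 < F.level u}

/-- If the edge from every non-root vertex `u` to its parent is coloured `κ u` and nothing else is
coloured, then `e` is satisfied. -/
def Satisfies {β : Type*} (F : LevelledForest G) (κ : V → β) (e : Sym2 V) : Prop :=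
  ∃ u, 0 < F.level u ∧ F.edge u ∈ EON G e ∧
    ∀ v, 0 < F.level v → F.edge v ∈ ECN G e → κ v = κ u → v = u

/-- A forest of a subgraph, seen in the larger graph. -/
def ofLE (F : LevelledForest H) (h : H ≤ G) : LevelledForest G where
  level := F.level
  parent := F.parent
  adj_parent u hu := h (F.adj_parent u hu)
  level_eq := F.level_eq

theorem edge_mem_ECN_mk {F : LevelledForest G} {u x y : V} (hu : 0 < F.level u) :
    F.edge u ∈ ECN G s(x, y) ↔ u = x ∨ u = y ∨ F.parent u = x ∨ F.parent u = y := by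
  rw [edge, mk_mem_ECN_mk, and_iff_right (F.adj_parent u hu)]

theorem edge_injOn (F : LevelledForest G) : Set.InjOn F.edge {u | 0 < F.level u} := by
  intro u hu v hv huv
  rcases Sym2.eq_iff.1 huv with ⟨h, -⟩ | ⟨h, h'⟩
  · exact h
  · have := F.level_eq u hu
    have := F.level_eq v hv
    grind

theorem Satisfies.ofLE {β : Type*} {F : LevelledForest H} {κ : V → β} {e : Sym2 V}
    (hF : F.Satisfies κ e) (h : H ≤ G) : (F.ofLE h).Satisfies κ e := by
  induction e using Sym2.ind with
  | _ x y =>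
  obtain ⟨u, hu, ⟨hue, hne⟩, huniq⟩ := hF
  exact ⟨u, hu, ⟨(edge_mem_ECN_mk (F := F.ofLE h) hu).2 ((edge_mem_ECN_mk hu).1 hue), hne⟩,
    fun v hv hve => huniq v hv ((edge_mem_ECN_mk (F := F) hv).2
      ((edge_mem_ECN_mk (F := F.ofLE h) hv).1 hve))⟩

theorem Satisfies.refine {β γ : Type*} {F : LevelledForest G} {κ : V → β} {κ' : V → γ}
    {e : Sym2 V} (hF : F.Satisfies κ e) (h : ∀ u v, κ' u = κ' v → κ u = κ v) :
    F.Satisfies κ' e := by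
  obtain ⟨u, hu, hue, huniq⟩ := hF
  exact ⟨u, hu, hue, fun v hv hve hvu => huniq v hv hve (h v u hvu)⟩

theorem satisfies_of_level_eq {β : Type*} {F : LevelledForest G} {κ : V → β} {x y : V}
    (hx : 0 < F.level x) (hxy : F.level y = F.level x + 1)
    (hκ : ∀ v, F.level v = F.level x + 1 ∨ F.level v = F.level x + 2 → κ v ≠ κ x) :
    F.Satisfies κ s(x, y) := by
  have hpx := F.level_eq x hx
  refine ⟨x, hx, ⟨(edge_mem_ECN_mk hx).2 (.inl rfl), fun h => ?_⟩, fun v hv hve hvx => ?_⟩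
  · have : F.parent x = y := Sym2.congr_right.1 h
    rw [this] at hpx
    lia
  · have hpv := F.level_eq v hv
    by_contra hne
    refine hκ v ?_ hvx
    rcases (edge_mem_ECN_mk hv).1 hve with rfl | rfl | h | h
    · exact absurd rfl hne
    · exact .inl hxy
    · exact .inl (by rw [hpv, h])
    · exact .inr (by rw [hpv, h, hxy])

/-- The level modulo three, as a labelling by three colours. -/
def levelMod (F : LevelledForest G) (u : V) : Fin 3 := Fin.ofNat 3 (F.level u)

theorem satisfies_levelMod {F : LevelledForest G} {x y : V}
    (hx : 0 < F.level x) (hxy : F.level y = F.level x + 1) : F.Satisfies F.levelMod s(x, y) := by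
  refine satisfies_of_level_eq hx hxy fun v hv h => ?_
  have : F.level v % 3 = F.level x % 3 := congrArg Fin.val h
  lia

theorem exists_partialColouring {ι : Type*} [Fintype ι] {n : ι → ℕ} (F : ι → LevelledForest G)
    (κ : ∀ i, V → Fin (n i)) (hF : Pairwise fun i j => Disjoint (F i).edges (F j).edges) :
    ∃ c : Sym2 V → Option ℕ, PartialColouring G c (∑ i, n i) ∧
      ∀ i e, (F i).Satisfies (κ i) e → SatisfiedP G c e := by
  classical
  let edge : (Σ i, {u // 0 < (F i).level u}) → Sym2 V := fun a => (F a.1).edge a.2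
  have hedge : Function.Injective edge := by
    rintro ⟨i, u, hu⟩ ⟨j, v, hv⟩ h
    obtain rfl : i = j := by
      by_contra hij
      exact Set.disjoint_left.1 (hF hij) ⟨u, hu, rfl⟩ ⟨v, hv, h.symm⟩
    obtain rfl : u = v := (F i).edge_injOn hu hv h
    rfl
  let palette : (Σ i, Fin (n i)) ≃ Fin (∑ i, n i) := Fintype.equivFinOfCardEq (by simp)
  let c : Sym2 V → Option ℕ := fun e =>
    (Function.partialInv edge e).map fun a => palette ⟨a.1, κ a.1 a.2⟩
  have hc : ∀ e α, c e = some α ↔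
      ∃ i u, 0 < (F i).level u ∧ (F i).edge u = e ∧ (palette ⟨i, κ i u⟩ : ℕ) = α := by
    intro e α
    simp only [c, Option.map_eq_some_iff, hedge.isPartialInv _ _, Sigma.exists, Subtype.exists,
      edge, exists_prop]
  refine ⟨c, fun e α h => ?_, ?_⟩
  · obtain ⟨i, u, hu, rfl, rfl⟩ := (hc e α).1 h
    exact ⟨(F i).adj_parent u hu, Fin.is_lt _⟩
  · rintro i e ⟨u, hu, hue, huniq⟩
    refine ⟨(F i).edge u, hue, _, (hc _ _).2 ⟨i, u, hu, rfl, rfl⟩, fun f hf hcf => ?_⟩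
    obtain ⟨j, v, hv, rfl, hvu⟩ := (hc _ _).1 hcf
    obtain ⟨rfl, hκ⟩ := Sigma.mk.inj_iff.1 (palette.injective (Fin.ext hvu))
    rw [huniq v hv hf (eq_of_heq hκ)]

end LevelledForest

end LevelledForest

section BreadthFirst

variable {V : Type*} {H : SimpleGraph V}

theorem exists_adj_dist_eq_dist_add_one {u r : V} (h : H.Reachable u r) (hne : u ≠ r) :
    ∃ w, H.Adj u w ∧ H.dist u r = H.dist w r + 1 := by
  obtain ⟨p, hp⟩ := h.exists_walk_length_eq_dist
  cases p with
  | nil => exact absurd rfl hne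
  | @cons _ w _ huw q =>
    have h₁ : H.dist w r ≤ q.length := dist_le q
    have h₂ : H.dist u r ≤ H.dist u w + H.dist w r := huw.reachable.dist_triangle_left r
    rw [dist_eq_one_iff_adj.2 huw] at h₂
    rw [Walk.length_cons] at hp
    exact ⟨w, huw, by lia⟩

theorem dist_eq_dist_add_one_or_of_coloring (C : H.Coloring Bool) {u v r : V} (huv : H.Adj u v)
    (hv : H.Reachable v r) : H.dist v r = H.dist u r + 1 ∨ H.dist u r = H.dist v r + 1 := by
  obtain ⟨p, hp⟩ := (huv.reachable.trans hv).exists_walk_length_eq_dist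
  obtain ⟨q, hq⟩ := hv.exists_walk_length_eq_dist
  have hparity : ¬(Even p.length ↔ Even q.length) := by
    have := C.valid huv
    rw [C.even_length_iff_congr, C.even_length_iff_congr]
    grind
  rw [hp, hq] at hparity
  have h₁ : H.dist v r ≤ H.dist v u + H.dist u r := huv.symm.reachable.dist_triangle_left r
  have h₂ : H.dist u r ≤ H.dist u v + H.dist v r := huv.reachable.dist_triangle_left r
  rw [dist_eq_one_iff_adj.2 huv.symm] at h₁
  rw [dist_eq_one_iff_adj.2 huv] at h₂
  have hne : H.dist u r ≠ H.dist v r := fun h => hparity (by rw [h])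
  lia

theorem connectedComponent_exists_root {good : Set V}
    (hgood : ∀ u ∈ H.support, ∃ r ∈ good, H.Reachable u r) (c : H.ConnectedComponent) :
    ∃ r, H.connectedComponentMk r = c ∧ (r ∈ H.support → r ∈ good) := by
  induction c using ConnectedComponent.ind with
  | _ u =>
  by_cases hu : u ∈ H.support
  · obtain ⟨r, hr, hur⟩ := hgood u hu
    exact ⟨r, ConnectedComponent.sound hur.symm, fun _ => hr⟩
  · exact ⟨u, rfl, fun h => absurd h hu⟩

namespace LevelledForest

/-- The forest consists of one breadth-first tree in each connected component, and no edge of the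
graph joins two vertices of the same level (so that the graph is bipartite). -/
structure IsBreadthFirst (F : LevelledForest H) : Prop where
  level_adj : ∀ ⦃u v⦄, H.Adj u v → F.level v = F.level u + 1 ∨ F.level u = F.level v + 1
  root_unique : ∀ ⦃u v⦄, H.Reachable u v → F.level u = 0 → F.level v = 0 → u = v

theorem exists_isBreadthFirst (C : H.Coloring Bool) {good : Set V}
    (hgood : ∀ u ∈ H.support, ∃ r ∈ good, H.Reachable u r) :
    ∃ F : LevelledForest H, F.IsBreadthFirst ∧ ∀ r ∈ H.support, F.level r = 0 → r ∈ good := by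
  choose root hroot root_good using connectedComponent_exists_root hgood
  let ρ : V → V := fun u => root (H.connectedComponentMk u)
  have hρ : ∀ u, H.Reachable u (ρ u) := fun u => (ConnectedComponent.exact (hroot _)).symm
  have hρ_eq : ∀ {u v}, H.Reachable u v → ρ u = ρ v := fun huv =>
    congrArg root (ConnectedComponent.sound huv)
  have level_eq_zero : ∀ {u}, H.dist u (ρ u) = 0 → u = ρ u := fun {u} => (hρ u).dist_eq_zero_iff.1
  have hparent : ∀ u, 0 < H.dist u (ρ u) →
      ∃ w, H.Adj u w ∧ H.dist u (ρ u) = H.dist w (ρ u) + 1 := fun u hu =>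
    exists_adj_dist_eq_dist_add_one (hρ u) fun h => hu.ne' ((hρ u).dist_eq_zero_iff.2 h)
  choose! parent parent_adj parent_dist using hparent
  let F : LevelledForest H := {
    level u := H.dist u (ρ u)
    parent := parent
    adj_parent := parent_adj
    level_eq u hu := by rw [parent_dist u hu, hρ_eq (parent_adj u hu).reachable] }
  refine ⟨F, ⟨fun u v huv => ?_, fun u v huv hu hv => ?_⟩, fun r hr hr0 => ?_⟩
  · simpa only [F, hρ_eq huv.reachable] using dist_eq_dist_add_one_or_of_coloring C huv (hρ v)
  · rw [level_eq_zero hu, level_eq_zero hv, hρ_eq huv]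
  · rw [level_eq_zero hr0] at hr ⊢
    exact root_good _ hr

end LevelledForest

end BreadthFirst

section FiveLabels

variable {V : Type*} {G H : SimpleGraph V}

namespace LevelledForest

theorem satisfies_of_level_eq_zero {β : Type*} {F : LevelledForest G} {κ : V → β} {r d y : V}
    (hr : F.level r = 0) (hy : F.level y = 1) (hpy : F.parent y = r) (hpd : F.parent d = r)
    (hdy : d ≠ y) (hκ : ∀ v, κ v = κ d → F.level v = 1 ∧ (F.parent v = r → v = d)) :
    F.Satisfies κ s(r, y) := by
  have hd : 0 < F.level d := by rw [(hκ d rfl).1]; exact one_pos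
  refine ⟨d, hd, ⟨(edge_mem_ECN_mk hd).2 (.inr (.inr (.inl hpd))), fun h => ?_⟩,
    fun v hv hve hvd => ?_⟩
  · rw [Set.mem_singleton_iff, edge, hpd, Sym2.eq_swap, Sym2.congr_right] at h
    exact hdy h
  · obtain ⟨hv1, hvr⟩ := hκ v hvd
    have hpv := F.level_eq v hv
    rcases (edge_mem_ECN_mk hv).1 hve with rfl | rfl | h | h
    · lia
    · exact hvr hpy
    · exact hvr h
    · rw [h] at hpv
      lia

theorem IsBreadthFirst.child_of_root {F : LevelledForest H} (hF : F.IsBreadthFirst) {r v : V}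
    (hrv : H.Adj r v) (hr : F.level r = 0) : F.level v = 1 ∧ F.parent v = r := by
  have hv : F.level v = 1 := by
    have := hF.level_adj hrv
    lia
  have hpv := F.level_eq v (by lia)
  have hadj := F.adj_parent v (by lia)
  exact ⟨hv, hF.root_unique (hadj.symm.reachable.trans hrv.symm.reachable) (by lia) hr⟩

open Classical in
/-- The level modulo three, except that the children `a r` and `b r` of each root `r` carry the
private labels `3` and `4`. -/
noncomputable def markedLevelMod (F : LevelledForest G) (a b : V → V) (v : V) : Fin 5 :=
  if F.level v = 1 ∧ v = a (F.parent v) then 3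
  else if F.level v = 1 ∧ v = b (F.parent v) then 4
  else ⟨F.level v % 3, by lia⟩

theorem markedLevelMod_cases (F : LevelledForest G) (a b : V → V) (v : V) :
    (F.markedLevelMod a b v : ℕ) = 3 ∧ F.level v = 1 ∧ v = a (F.parent v) ∨
    (F.markedLevelMod a b v : ℕ) = 4 ∧ F.level v = 1 ∧ v = b (F.parent v) ∨
    (F.markedLevelMod a b v : ℕ) = F.level v % 3 := by
  unfold markedLevelMod
  split_ifs with ha hb
  · exact .inl ⟨rfl, ha⟩
  · exact .inr (.inl ⟨rfl, hb⟩)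
  · exact .inr (.inr rfl)

-- An edge at a root is satisfied by the marked child that is not on it.
theorem IsBreadthFirst.exists_satisfies_five {F : LevelledForest H} (hF : F.IsBreadthFirst)
    (hroot : ∀ r ∈ H.support, F.level r = 0 → (H.neighborSet r).Nontrivial) :
    ∃ κ : V → Fin 5, ∀ e ∈ H.edgeSet, F.Satisfies κ e := by
  have hchildren : ∀ r, (H.neighborSet r).Nontrivial → ∃ a b, H.Adj r a ∧ H.Adj r b ∧ a ≠ b :=
    fun r ⟨a, ha, b, hb, hab⟩ => ⟨a, b, ha, hb, hab⟩
  choose! a b ha hb hab using hchildren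
  let κ := F.markedLevelMod a b
  have κ_cases := F.markedLevelMod_cases a b
  have hsat : ∀ x y, H.Adj x y → F.level y = F.level x + 1 → F.Satisfies κ s(x, y) := by
    intro x y hxy hlevel
    rcases Nat.eq_zero_or_pos (F.level x) with hx | hx
    · have hr := hroot x hxy.mem_support_left hx
      obtain ⟨hy, hpy⟩ := hF.child_of_root hxy hx
      obtain ⟨ha1, hpa⟩ := hF.child_of_root (ha x hr) hx
      obtain ⟨hb1, hpb⟩ := hF.child_of_root (hb x hr) hx
      by_cases hay : a x = y
      · have hκb : κ (b x) = 4 := by simp [κ, markedLevelMod, hb1, hpb, (hab x hr).symm]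
        refine satisfies_of_level_eq_zero hx hy hpy hpb (hay ▸ (hab x hr).symm) ?_
        grind
      · have hκa : κ (a x) = 3 := by simp [κ, markedLevelMod, ha1, hpa]
        refine satisfies_of_level_eq_zero hx hy hpy hpa hay ?_
        grind
    · refine satisfies_of_level_eq hx hlevel fun v hv h => ?_
      have := congrArg Fin.val h
      grind
  refine ⟨κ, fun e he => ?_⟩
  induction e using Sym2.ind with
  | _ x y =>
  rcases hF.level_adj he with h | h
  · exact hsat x y he h
  · rw [Sym2.eq_swap]
    exact hsat y x he.symm h

end LevelledForest

end FiveLabels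

section CrossingEdges

variable {V : Type*} {G : SimpleGraph V} {I J : Set V}

/-- The graph of the edges of `G` leaving `I` that have an adjacent edge in `G`. -/
def crossGraph (G : SimpleGraph V) (I : Set V) : SimpleGraph V where
  Adj u v := G.Adj u v ∧ (u ∈ I ↔ v ∉ I) ∧
    ((G.neighborSet u).Nontrivial ∨ (G.neighborSet v).Nontrivial)
  symm := ⟨fun _ _ ⟨h, hI, hn⟩ => ⟨h.symm, by tauto, hn.symm⟩⟩

theorem crossGraph_le : crossGraph G I ≤ G := fun _ _ h => h.1

theorem neighborSet_crossGraph (hI : G.IsIndepSet I) {r : V} (hr : r ∈ I)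
    (hn : (G.neighborSet r).Nontrivial) : (crossGraph G I).neighborSet r = G.neighborSet r :=
  Set.Subset.antisymm (fun _ h => h.1) fun _ h =>
    ⟨h, iff_of_true hr fun hv => hI hr hv h.ne h, .inl hn⟩

theorem exists_reachable_root_crossGraph
    (hdom : ∀ u ∉ I, (G.neighborSet u).Nontrivial →
      ∃ v ∈ I, G.Adj u v ∧ (G.neighborSet v).Nontrivial)
    {u : V} (hu : u ∈ (crossGraph G I).support) :
    ∃ r ∈ {r | r ∈ I ∧ (G.neighborSet r).Nontrivial}, (crossGraph G I).Reachable u r := by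
  have key : ∀ w, (G.neighborSet w).Nontrivial →
      ∃ r ∈ {r | r ∈ I ∧ (G.neighborSet r).Nontrivial}, (crossGraph G I).Reachable w r := by
    intro w hw
    by_cases hwI : w ∈ I
    · exact ⟨w, ⟨hwI, hw⟩, .rfl⟩
    · obtain ⟨r, hr, hwr, hrn⟩ := hdom w hwI hw
      have hadj : (crossGraph G I).Adj w r := ⟨hwr, iff_of_false hwI (not_not_intro hr), .inl hw⟩
      exact ⟨r, ⟨hr, hrn⟩, hadj.reachable⟩
  obtain ⟨v, huv⟩ := hu
  rcases huv.2.2 with hn | hn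
  · exact key u hn
  · obtain ⟨r, hr, hvr⟩ := key v hn
    exact ⟨r, hr, huv.reachable.trans hvr⟩

theorem exists_forest_crossGraph (hI : G.IsIndepSet I)
    (hdom : ∀ u ∉ I, (G.neighborSet u).Nontrivial →
      ∃ v ∈ I, G.Adj u v ∧ (G.neighborSet v).Nontrivial) :
    ∃ F : LevelledForest (crossGraph G I),
      (∀ u ∈ (crossGraph G I).support, F.level u = 0 → u ∈ I) ∧
      ∃ κ : V → Fin 5, ∀ e ∈ (crossGraph G I).edgeSet, F.Satisfies κ e := by
  classical
  let C : (crossGraph G I).Coloring Bool := .mk (fun u => decide (u ∈ I)) fun {u v} huv => by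
    have := huv.2.1
    simp only [ne_eq, decide_eq_decide]
    tauto
  obtain ⟨F, hF, hroot⟩ := LevelledForest.exists_isBreadthFirst C
    fun u hu => exists_reachable_root_crossGraph hdom hu
  refine ⟨F, fun u hu hu0 => (hroot u hu hu0).1, hF.exists_satisfies_five fun r hr hr0 => ?_⟩
  obtain ⟨hrI, hrn⟩ := hroot r hr hr0
  rwa [neighborSet_crossGraph hI hrI hrn]

theorem parent_mem_iff_crossGraph {F : LevelledForest (crossGraph G I)} {u : V}
    (hu : 0 < F.level u) : F.parent u ∈ I ↔ u ∉ I := by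
  have := (F.adj_parent u hu).2.1
  tauto

-- Every forest edge from `J` to its parent ends in `I`, so the one starting at `x` is the only one
-- meeting `x` or `y`.
theorem satisfies_of_label_mem {β : Type*} {F : LevelledForest (crossGraph G I)} {κ : V → β}
    {x y : V} (hroot : ∀ u ∈ (crossGraph G I).support, F.level u = 0 → u ∈ I)
    (hIJ : Disjoint I J) (hxJ : x ∈ J) (hyI : y ∉ I) (hyJ : y ∉ J) (hxy : G.Adj x y)
    (hx : ∃ v ∈ I, G.Adj x v) (hκ : ∀ u, κ u = κ x → u ∈ J) :
    (F.ofLE crossGraph_le).Satisfies κ s(x, y) := by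
  have hJI : ∀ u ∈ J, u ∉ I := fun u hu => hIJ.notMem_of_mem_right hu
  have hx0 : 0 < F.level x := by
    obtain ⟨v, hv, hxv⟩ := hx
    have hn : (G.neighborSet x).Nontrivial := ⟨v, hxv, y, hxy, fun h => hyI (h ▸ hv)⟩
    have hadj : (crossGraph G I).Adj x v :=
      ⟨hxv, iff_of_false (hJI x hxJ) (not_not_intro hv), .inl hn⟩
    exact Nat.pos_of_ne_zero fun h => hJI x hxJ (hroot x hadj.mem_support_left h)
  have parent_mem : ∀ u ∈ J, 0 < F.level u → F.parent u ∈ I := fun u huJ hu =>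
    (parent_mem_iff_crossGraph hu).2 (hJI u huJ)
  have edge_mem_iff := fun u (hu : 0 < F.level u) =>
    LevelledForest.edge_mem_ECN_mk (F := F.ofLE crossGraph_le) (x := x) (y := y) hu
  refine ⟨x, hx0, ⟨(edge_mem_iff x hx0).2 (.inl rfl), fun h => ?_⟩, fun u hu hue hux => ?_⟩
  · have hpx : F.parent x = y := Sym2.congr_right.1 h
    exact hyI (hpx ▸ parent_mem x hxJ hx0)
  · have huJ := hκ u hux
    have hpu := parent_mem u huJ hu
    rcases (edge_mem_iff u hu).1 hue with h | h | h | h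
    · exact h
    · exact absurd (h ▸ huJ) hyJ
    · exact absurd (h ▸ hpu) (hJI x hxJ)
    · exact absurd (h ▸ hpu) hyI

theorem exists_forest_crossing (hI : G.IsIndepSet I)
    (hdom : ∀ u ∉ I, (G.neighborSet u).Nontrivial →
      ∃ v ∈ I, G.Adj u v ∧ (G.neighborSet v).Nontrivial)
    (hIJ : Disjoint I J) (hJ : ∀ u ∈ J, ∃ v ∈ I, G.Adj u v) :
    ∃ (F : LevelledForest G) (κ : V → Fin (2 * 5)),
      (∀ u, 0 < F.level u → (F.parent u ∈ I ↔ u ∉ I)) ∧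
      (∀ e ∈ (crossGraph G I).edgeSet, F.Satisfies κ e) ∧
      ∀ x ∈ J, ∀ y, y ∉ I → y ∉ J → G.Adj x y → F.Satisfies κ s(x, y) := by
  classical
  obtain ⟨F, hroot, κ, hκ⟩ := exists_forest_crossGraph hI hdom
  let κ' : V → Fin (2 * 5) := fun u => finProdFinEquiv (if u ∈ J then 1 else 0, κ u)
  have hκ' : ∀ u v, κ' u = κ' v → (u ∈ J ↔ v ∈ J) ∧ κ u = κ v := by
    intro u v huv
    by_cases hu : u ∈ J <;> by_cases hv : v ∈ J <;>
      simpa [κ', hu, hv] using finProdFinEquiv.injective huv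
  exact ⟨F.ofLE crossGraph_le, κ', fun u hu => parent_mem_iff_crossGraph hu,
    fun e he => ((hκ e he).refine fun u v h => (hκ' u v h).2).ofLE crossGraph_le,
    fun x hx y hyI hyJ hxy => satisfies_of_label_mem hroot hIJ hx hyI hyJ hxy (hJ x hx)
      fun u hu => (hκ' u x hu).1.2 hx⟩

end CrossingEdges

section TopDifferingBit

theorem xor_lt_two_pow_iff {x y i : ℕ} : x ^^^ y < 2 ^ i ↔ x / 2 ^ i = y / 2 ^ i := by
  rw [← Nat.div_eq_zero_iff_lt (Nat.two_pow_pos i), Nat.xor_div_two_pow, xor_eq_zero_iff]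

theorem log_xor_eq_iff {x y i : ℕ} (hxy : x ≠ y) :
    Nat.log 2 (x ^^^ y) = i ↔ x / 2 ^ (i + 1) = y / 2 ^ (i + 1) ∧ x / 2 ^ i ≠ y / 2 ^ i := by
  have hne : x ^^^ y ≠ 0 := fun h => hxy (xor_eq_zero_iff.1 h)
  rw [Nat.log_eq_iff (.inr ⟨one_lt_two, hne⟩), ← not_lt, xor_lt_two_pow_iff, xor_lt_two_pow_iff,
    and_comm]

theorem testBit_log_xor_ne {x y : ℕ} (hxy : x ≠ y) :
    x.testBit (Nat.log 2 (x ^^^ y)) ≠ y.testBit (Nat.log 2 (x ^^^ y)) := by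
  obtain ⟨h₁, h₂⟩ := (log_xor_eq_iff hxy).1 rfl
  rw [pow_succ, ← Nat.div_div_eq_div_mul, ← Nat.div_div_eq_div_mul] at h₁
  simp only [Nat.testBit_eq_decide_div_mod_eq, ne_eq, decide_eq_decide]
  lia

theorem log_xor_lt_clog {x y n : ℕ} (hxy : x ≠ y) (hx : x < n) (hy : y < n) :
    Nat.log 2 (x ^^^ y) < Nat.clog 2 n := by
  have hn : n ≤ 2 ^ Nat.clog 2 n := Nat.le_pow_clog one_lt_two n
  exact Nat.log_lt_of_lt_pow (fun h => hxy (xor_eq_zero_iff.1 h))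
    (Nat.xor_lt_two_pow (hx.trans_le hn) (hy.trans_le hn))

-- `d` is the largest number below the multiple of `2 ^ i` obtained from `y` by clearing lower bits.
theorem exists_lt_log_xor_eq {x y : ℕ} (hxy : x < y) :
    ∃ d < y, Nat.log 2 (y ^^^ d) = Nat.log 2 (x ^^^ y) ∧
      Nat.log 2 (d ^^^ (d + 1)) = Nat.log 2 (x ^^^ y) := by
  obtain ⟨h₁, h₂⟩ := (log_xor_eq_iff hxy.ne).1 rfl
  set i := Nat.log 2 (x ^^^ y)
  have hle : x / 2 ^ i ≤ y / 2 ^ i := Nat.div_le_div_right hxy.le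
  simp only [pow_succ, ← Nat.div_div_eq_div_mul] at h₁
  obtain ⟨m, hm⟩ : ∃ m, y / 2 ^ i = m + 1 := Nat.exists_eq_add_one.2 (by lia)
  have hpos : 0 < 2 ^ i := Nat.two_pow_pos i
  have hy : (m + 1) * 2 ^ i ≤ y := hm ▸ Nat.div_mul_le_self y _
  obtain ⟨d, hd⟩ : ∃ d, (m + 1) * 2 ^ i = d + 1 := Nat.exists_eq_add_one.2 (by positivity)
  have hd_div : d / 2 ^ i = m := Nat.div_eq_of_lt_le (by lia) (by lia)
  have hd_succ_div : (d + 1) / 2 ^ i = m + 1 := by rw [← hd, Nat.mul_div_cancel _ hpos]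
  refine ⟨d, by lia, (log_xor_eq_iff (by lia)).2 ?_, (log_xor_eq_iff d.succ_ne_self.symm).2 ?_⟩ <;>
    simp only [pow_succ, ← Nat.div_div_eq_div_mul, hm, hd_div, hd_succ_div] <;> lia

variable {V : Type*} {G H : SimpleGraph V}

/-- The edges of `H` whose ends have colours with `i` as highest differing binary digit. -/
def topBitGraph (C : H.Coloring ℕ) (i : ℕ) : SimpleGraph V where
  Adj u v := H.Adj u v ∧ Nat.log 2 (C u ^^^ C v) = i
  symm := ⟨fun u v ⟨h, hi⟩ => ⟨h.symm, by rwa [Nat.xor_comm]⟩⟩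

theorem topBitGraph_le (C : H.Coloring ℕ) (i : ℕ) : topBitGraph C i ≤ H := fun _ _ h => h.1

-- If `C x < C y`, greediness puts the smaller colour found in `exists_lt_log_xor_eq` on a neighbour
-- of `y`.
theorem IsGreedy.exists_reachable_topBitGraph {C : H.Coloring ℕ} (hC : IsGreedy C) {i : ℕ}
    {u : V} (hu : u ∈ (topBitGraph C i).support) :
    ∃ r ∈ {r | Nat.log 2 (C r ^^^ (C r + 1)) = i}, (topBitGraph C i).Reachable u r := by
  obtain ⟨v, huv⟩ := hu
  have key : ∀ x y, (topBitGraph C i).Adj x y → C x < C y →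
      ∃ r ∈ {r | Nat.log 2 (C r ^^^ (C r + 1)) = i}, (topBitGraph C i).Reachable y r := by
    rintro x y ⟨-, rfl⟩ hlt
    obtain ⟨d, hd, hyd, hdi⟩ := exists_lt_log_xor_eq hlt
    obtain ⟨r, hyr, rfl⟩ := hC y d hd
    exact ⟨r, hdi, Adj.reachable ⟨hyr, hyd⟩⟩
  rcases (C.valid huv.1).lt_or_gt with h | h
  · obtain ⟨r, hr, hvr⟩ := key u v huv h
    exact ⟨r, hr, huv.reachable.trans hvr⟩
  · exact key v u huv.symm h

theorem IsGreedy.exists_forest_topBitGraph {C : H.Coloring ℕ} (hC : IsGreedy C) (i : ℕ) :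
    ∃ F : LevelledForest (topBitGraph C i), F.IsBreadthFirst ∧
      ∀ r ∈ (topBitGraph C i).support, F.level r = 0 → Nat.log 2 (C r ^^^ (C r + 1)) = i := by
  let B : (topBitGraph C i).Coloring Bool := .mk (fun u => (C u).testBit i) fun {u v} huv => by
    rw [← huv.2]
    exact testBit_log_xor_ne (C.valid huv.1)
  exact LevelledForest.exists_isBreadthFirst B fun u hu => hC.exists_reachable_topBitGraph hu

open Classical in
/-- The forest with a new level added at the bottom: each root `u` of `F` that is not an isolated
vertex gets `f u` as its parent. -/
noncomputable def LevelledForest.graft (F : LevelledForest H) (h : H ≤ G) (f : V → V)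
    (hf : ∀ u ∈ H.support, G.Adj u (f u) ∧ f u ∉ H.support) : LevelledForest G where
  level u := if u ∈ H.support then F.level u + 1 else 0
  parent u := if F.level u = 0 then f u else F.parent u
  adj_parent u hu := by
    have huH : u ∈ H.support := by by_contra huH; simp [huH] at hu
    split_ifs with h0
    · exact (hf u huH).1
    · exact h (F.adj_parent u (Nat.pos_of_ne_zero h0))
  level_eq u hu := by
    have huH : u ∈ H.support := by by_contra huH; simp [huH] at hu
    by_cases h0 : F.level u = 0
    · simp [huH, h0, (hf u huH).2]
    · have hpos := Nat.pos_of_ne_zero h0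
      simp [huH, (F.adj_parent u hpos).mem_support_right, F.level_eq u hpos]

namespace LevelledForest

variable {F : LevelledForest H} {h : H ≤ G} {f : V → V}
  {hf : ∀ u ∈ H.support, G.Adj u (f u) ∧ f u ∉ H.support}

theorem level_graft_pos_iff {u : V} : 0 < (F.graft h f hf).level u ↔ u ∈ H.support := by
  by_cases hu : u ∈ H.support <;> simp [graft, hu]

theorem parent_graft (u : V) : (F.graft h f hf).parent u = f u ∧ F.level u = 0 ∨
    H.Adj u ((F.graft h f hf).parent u) := by
  by_cases hu : F.level u = 0
  · simp [graft, hu]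
  · simpa [graft, hu] using F.adj_parent u (Nat.pos_of_ne_zero hu)

-- Grafting leaves no edge of `H` at the lowest level, where three labels would not suffice.
theorem IsBreadthFirst.satisfies_graft (hF : F.IsBreadthFirst) {e : Sym2 V}
    (he : e ∈ H.edgeSet) : (F.graft h f hf).Satisfies (F.graft h f hf).levelMod e := by
  have key : ∀ x y, H.Adj x y → F.level y = F.level x + 1 →
      (F.graft h f hf).Satisfies (F.graft h f hf).levelMod s(x, y) := fun x y hxy hlevel =>
    satisfies_levelMod (level_graft_pos_iff.2 hxy.mem_support_left)
      (by simp [graft, hxy.mem_support_left, hxy.mem_support_right, hlevel])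
  induction e using Sym2.ind with
  | _ x y =>
  rcases hF.level_adj he with hlevel | hlevel
  · exact key x y he hlevel
  · rw [Sym2.eq_swap]
    exact key y x he.symm hlevel

end LevelledForest

-- The forest using a given edge is recovered from the edge: from the colours of both ends if both
-- lie in `S`, and otherwise from the colour of the one end that does.
theorem pairwise_disjoint_edges_of_topBit {ι : Type*} {F : ι → LevelledForest G} {b : ι → ℕ}
    (hb : Function.Injective b) {S : Set V} {C : V → ℕ}
    (hF : ∀ i u, 0 < (F i).level u → u ∈ S ∧
      (((F i).parent u ∈ S ∧ Nat.log 2 (C u ^^^ C ((F i).parent u)) = b i) ∨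
       ((F i).parent u ∉ S ∧ Nat.log 2 (C u ^^^ (C u + 1)) = b i))) :
    Pairwise fun i j => Disjoint (F i).edges (F j).edges := by
  refine fun i j hij => Set.disjoint_left.2 ?_
  rintro _ ⟨u, hu, rfl⟩ ⟨v, hv, hvu⟩
  have := hF i u hu
  have := hF j v hv
  refine hij (hb ?_)
  rcases Sym2.eq_iff.1 hvu with ⟨rfl, hp⟩ | ⟨rfl, hp⟩ <;> grind

theorem exists_forests_satisfying_subgraph {n : ℕ} (hH : H.Colorable n) (h : H ≤ G) {f : V → V}
    (hf : ∀ u ∈ H.support, G.Adj u (f u) ∧ f u ∉ H.support) :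
    ∃ F : Fin (Nat.clog 2 n) → LevelledForest G,
      (Pairwise fun i j => Disjoint (F i).edges (F j).edges) ∧
      (∀ i u, 0 < (F i).level u →
        u ∈ H.support ∧ ((F i).parent u ∈ H.support ∨ (F i).parent u = f u)) ∧
      ∀ e ∈ H.edgeSet, ∃ i, (F i).Satisfies (F i).levelMod e := by
  obtain ⟨C, hC, hCn⟩ := exists_isGreedy_coloring hH
  choose F hF hroot using fun i => hC.exists_forest_topBitGraph i
  have hsupp : ∀ i, (topBitGraph C i).support ⊆ H.support := fun i =>
    support_mono (topBitGraph_le C i)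
  let F' : Fin (Nat.clog 2 n) → LevelledForest G := fun i =>
    (F i).graft ((topBitGraph_le C i).trans h) f fun u hu =>
      ⟨(hf u (hsupp i hu)).1, fun hfu => (hf u (hsupp i hu)).2 (hsupp i hfu)⟩
  have harc : ∀ i u, 0 < (F' i).level u → u ∈ H.support ∧
      (((F' i).parent u ∈ H.support ∧ Nat.log 2 (C u ^^^ C ((F' i).parent u)) = i) ∨
       ((F' i).parent u = f u ∧ Nat.log 2 (C u ^^^ (C u + 1)) = i)) := by
    intro i u hu
    have hu := LevelledForest.level_graft_pos_iff.1 hu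
    refine ⟨hsupp i hu, ?_⟩
    rcases LevelledForest.parent_graft u with ⟨hp, h0⟩ | hp
    · exact .inr ⟨hp, hroot i u hu h0⟩
    · exact .inl ⟨hsupp i hp.mem_support_right, hp.2⟩
  refine ⟨F', pairwise_disjoint_edges_of_topBit Fin.val_injective (S := H.support) (C := C)
    fun i u hu => ?_, fun i u hu => ?_, fun e he => ?_⟩
  · obtain ⟨huS, hp⟩ := harc i u hu
    exact ⟨huS, hp.imp_right fun ⟨hpf, hi⟩ => ⟨by rw [hpf]; exact (hf u huS).2, hi⟩⟩
  · exact ⟨(harc i u hu).1, (harc i u hu).2.imp And.left And.left⟩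
  · induction e using Sym2.ind with
    | _ x y =>
    have he : H.Adj x y := he
    exact ⟨⟨_, log_xor_lt_clog (C.valid he) (hCn x) (hCn y)⟩,
      (hF _).satisfies_graft (e := s(x, y)) ⟨he, rfl⟩⟩

end TopDifferingBit

section Assembly

variable {V : Type*} {G : SimpleGraph V}

theorem exists_two_layers (G : SimpleGraph V) :
    ∃ I K : Set V, G.IsIndepSet I ∧ G.IsIndepSet K ∧ Disjoint I K ∧
      (∀ u ∉ I, (G.neighborSet u).Nontrivial →
        ∃ v ∈ I, G.Adj u v ∧ (G.neighborSet v).Nontrivial) ∧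
      (∀ u ∉ I, ∃ v ∈ I, G.Adj u v) ∧ ∀ u ∉ I, u ∉ K → ∃ v ∈ K, G.Adj u v := by
  obtain ⟨A, -, hAN, hA, hAdom⟩ := exists_dominating_isIndepSet (G := G) (Set.pairwise_empty _)
    (Set.empty_subset {u | (G.neighborSet u).Nontrivial})
  obtain ⟨I, hAI, -, hI, hIdom⟩ := exists_dominating_isIndepSet hA (Set.subset_univ A)
  obtain ⟨K, -, hKI, hK, hKdom⟩ := exists_dominating_isIndepSet (G := G) (Set.pairwise_empty _)
    (Set.empty_subset Iᶜ)
  refine ⟨I, K, hI, hK, Set.disjoint_left.2 fun u huI huK => hKI huK huI, fun u hu hn => ?_,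
    fun u => hIdom u trivial, hKdom⟩
  obtain ⟨v, hv, huv⟩ := hAdom u hn fun huA => hu (hAI huA)
  exact ⟨v, hAI hv, huv, hAN hv⟩

theorem edge_cases {I K : Set V} (hI : G.IsIndepSet I) (hK : G.IsIndepSet K) {e : Sym2 V}
    (he : e ∈ G.edgeSet) (hne : (EON G e).Nonempty) :
    e ∈ (crossGraph G I).edgeSet ∨ e ∈ (G.induce (I ∪ K)ᶜ).spanningCoe.edgeSet ∨
      ∃ x ∈ (I ∪ K)ᶜ, ∃ y ∈ K, y ∉ I ∧ G.Adj x y ∧ e = s(x, y) := by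
  induction e using Sym2.ind with
  | _ x y =>
  have hxy : G.Adj x y := he
  have hn := nontrivial_neighborSet_of_EON_nonempty hxy hne
  by_cases hcross : x ∈ I ↔ y ∉ I
  · exact .inl ⟨hxy, hcross, hn⟩
  have hII : ¬(x ∈ I ∧ y ∈ I) := fun h => hI h.1 h.2 hxy.ne hxy
  have hKK : ¬(x ∈ K ∧ y ∈ K) := fun h => hK h.1 h.2 hxy.ne hxy
  have hx : x ∉ I := by tauto
  have hy : y ∉ I := by tauto
  refine .inr ?_
  by_cases hxK : x ∈ K
  · exact .inr ⟨y, by simp_all, x, hxK, hx, hxy.symm, Sym2.eq_swap⟩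
  by_cases hyK : y ∈ K
  · exact .inr ⟨x, by simp_all, y, hyK, hy, hxy, rfl⟩
  · exact .inl (by simp_all)

theorem exists_forests_inside {I K : Set V} {n : ℕ} (hG : G.Colorable n) (hIK : Disjoint I K)
    (hdom : ∀ u ∉ I, u ∉ K → ∃ v ∈ K, G.Adj u v) :
    ∃ F : Fin (Nat.clog 2 n) → LevelledForest G,
      (Pairwise fun i j => Disjoint (F i).edges (F j).edges) ∧
      (∀ i u, 0 < (F i).level u → u ∉ I ∧ (F i).parent u ∉ I) ∧
      ∀ e ∈ (G.induce (I ∪ K)ᶜ).spanningCoe.edgeSet, ∃ i, (F i).Satisfies (F i).levelMod e := by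
  have hle := G.spanningCoe_induce_le (I ∪ K)ᶜ
  have hsupp : ∀ u ∈ (G.induce (I ∪ K)ᶜ).spanningCoe.support, u ∉ I ∧ u ∉ K := by
    rintro u ⟨v, huv⟩
    simp_all
  have hdom' : ∀ u, u ∉ I ∧ u ∉ K → ∃ v ∈ K, G.Adj u v := fun u hu => hdom u hu.1 hu.2
  choose! f hfK hfadj using hdom'
  obtain ⟨F, hdisj, harc, hsat⟩ := exists_forests_satisfying_subgraph (hG.mono_left hle) hle
    fun u hu => ⟨hfadj u (hsupp u hu), fun h => (hsupp _ h).2 (hfK u (hsupp u hu))⟩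
  refine ⟨F, hdisj, fun i u hu => ?_, hsat⟩
  obtain ⟨huH, hp⟩ := harc i u hu
  refine ⟨(hsupp u huH).1, ?_⟩
  rcases hp with hp | hp
  · exact (hsupp _ hp).1
  · rw [hp]
    exact hIK.notMem_of_mem_right (hfK u (hsupp u huH))

theorem exists_partialColouring_of_forests {k m n : ℕ} {F₀ : LevelledForest G}
    {F : Fin k → LevelledForest G} (κ₀ : V → Fin m) (κ : Fin k → V → Fin n)
    (hF₀ : ∀ i, Disjoint F₀.edges (F i).edges)
    (hF : Pairwise fun i j => Disjoint (F i).edges (F j).edges) :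
    ∃ c : Sym2 V → Option ℕ, PartialColouring G c (n * k + m) ∧
      (∀ e, F₀.Satisfies κ₀ e → SatisfiedP G c e) ∧
      ∀ e, (∃ i, (F i).Satisfies (κ i) e) → SatisfiedP G c e := by
  let forest : Option (Fin k) → LevelledForest G := fun i => i.elim F₀ F
  let label : ∀ i : Option (Fin k), V → Fin (i.elim m fun _ => n)
    | none => κ₀
    | some i => κ i
  obtain ⟨c, hc, hsat⟩ := LevelledForest.exists_partialColouring forest label <| by
    rintro (_ | i) (_ | j) hij
    · exact absurd rfl hij
    · exact hF₀ j
    · exact (hF₀ i).symm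
    · exact hF fun h => hij (congrArg some h)
  refine ⟨c, ?_, hsat none, fun e ⟨i, hi⟩ => hsat (some i) e hi⟩
  simpa [Fintype.sum_option, add_comm, mul_comm] using hc

theorem stmt8_general {n : ℕ} (hG : G.Colorable n) :
    ∃ c : Sym2 V → Option ℕ, PartialColouring G c (3 * Nat.clog 2 n + 10) ∧
      ∀ e ∈ G.edgeSet, (EON G e).Nonempty → SatisfiedP G c e := by
  obtain ⟨I, K, hI, hK, hIK, hIn, hIdom, hKdom⟩ := exists_two_layers G
  obtain ⟨F₀, κ₀, hF₀I, hcross, hJK⟩ := exists_forest_crossing (J := (I ∪ K)ᶜ) hI hIn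
    (Set.disjoint_left.2 fun u hu hJ => hJ (.inl hu)) fun u hu => hIdom u fun h => hu (.inl h)
  obtain ⟨F, hF, hFI, hJJ⟩ := exists_forests_inside hG hIK hKdom
  have hF₀F : ∀ i, Disjoint F₀.edges (F i).edges := by
    refine fun i => Set.disjoint_left.2 ?_
    rintro _ ⟨u, hu, rfl⟩ ⟨v, hv, hvu⟩
    have := hF₀I u hu
    have := hFI i v hv
    rcases Sym2.eq_iff.1 hvu with ⟨rfl, hp⟩ | ⟨rfl, hp⟩ <;> grind
  obtain ⟨c, hc, hsat₀, hsat⟩ := exists_partialColouring_of_forests κ₀ (fun i => (F i).levelMod)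
    hF₀F hF
  refine ⟨c, hc, fun e he hne => ?_⟩
  rcases edge_cases hI hK he hne with h | h | ⟨x, hx, y, hy, hyI, hxy, rfl⟩
  · exact hsat₀ e (hcross e h)
  · exact hsat e (hJJ e h)
  · exact hsat₀ _ (hJK x hx y hyI (not_not_intro (.inr hy)) hxy)

end Assembly

theorem stmt8 {V : Type*} (G : SimpleGraph V) (α : ℕ) (hα : 1 ≤ α)
    (hchrom : G.Colorable α) :
    ∃ c : Sym2 V → Option ℕ, PartialColouring G c (3 * Nat.clog 2 α + 16) ∧
      ∀ e ∈ G.edgeSet, (EON G e).Nonempty → SatisfiedP G c e := by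
  obtain ⟨c, hc, hsat⟩ := stmt8_general hchrom
  exact ⟨c, fun e a h => ⟨(hc e a h).1, (hc e a h).2.trans_le (by lia)⟩, hsat⟩
end
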